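/- Let μ be a purely point measure on ℝ^d belonging to S*(ℝ^d) with uniformly discrete support Λ such that inf_{λ∈Λ} |μ(λ)| > 0, and suppose that μ̂ is a purely point measure satisfying |μ̂|(B(0,r)) = O(r^d) as r → ∞. Then Λ is a finite union of translates of several pairwise disjoint full-rank lattices. -/

import Mathlib

open MeasureTheory SchwartzMap Metric Set
open scoped Pointwise RealInnerProductSpace ENNReal NNReal

noncomputable section

/-- Euclidean space `ℝ^d`. -/
abbrev Rd (d : ℕ) : Type := EuclideanSpace ℝ (Fin d)

/-- The space `S*(ℝ^d)` of tempered distributions: continuous linear functionals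
on the Schwartz space `S(ℝ^d)`. -/
abbrev TemperedDist (d : ℕ) : Type := SchwartzMap (Rd d) ℂ →L[ℂ] ℂ

/-- The Fourier transform of a tempered distribution: `f̂(φ) = f(φ̂)`. -/
def fourierTD {d : ℕ} (f : TemperedDist d) : TemperedDist d :=
  f.comp (fourierTransformCLM ℂ)

/-- The support of a tempered distribution: `x ∈ supp f` iff for every open
neighbourhood `U` of `x` there is a smooth compactly supported test function
supported in `U` on which `f` does not vanish. -/
def tdSupport {d : ℕ} (f : TemperedDist d) : Set (Rd d) :=
  {x | ∀ U : Set (Rd d), IsOpen U → x ∈ U →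
    ∃ φ : SchwartzMap (Rd d) ℂ, HasCompactSupport (⇑φ) ∧ tsupport (⇑φ) ⊆ U ∧ f φ ≠ 0}

/-- A set is locally finite if its intersection with every ball is finite. -/
def LocFinite {d : ℕ} (A : Set (Rd d)) : Prop :=
  ∀ (x : Rd d) (r : ℝ), (A ∩ Metric.ball x r).Finite

/-- A set is uniformly discrete if distances between distinct points are
bounded below by a positive constant. -/
def UniformlyDiscrete {d : ℕ} (A : Set (Rd d)) : Prop :=
  ∃ η > (0:ℝ), ∀ x ∈ A, ∀ y ∈ A, x ≠ y → η ≤ dist x y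

/-- A set is polynomially discrete (p-discrete) if
`|x - x'| ≥ c min{1, |x|^{-h}}` for distinct points `x, x'` of the set. -/
def PDiscrete {d : ℕ} (A : Set (Rd d)) : Prop :=
  ∃ c > (0:ℝ), ∃ h > (0:ℝ), ∀ x ∈ A, ∀ y ∈ A, x ≠ y →
    c * (if ‖x‖ ≤ 1 then 1 else ‖x‖ ^ (-h)) ≤ dist x y

/-- A set has bounded density if it is locally finite and the number of its
points in balls of radius 1 is uniformly bounded. -/
def BoundedDensity {d : ℕ} (A : Set (Rd d)) : Prop :=
  LocFinite A ∧ ∃ N : ℕ, ∀ x : Rd d, (A ∩ Metric.ball x 1).ncard ≤ N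

/-- A set is relatively dense if it intersects every ball of some fixed radius `R`. -/
def RelDense {d : ℕ} (A : Set (Rd d)) : Prop :=
  ∃ R : ℝ, 0 < R ∧ ∀ x : Rd d, ∃ a ∈ A, dist x a ≤ R

/-- A full-rank lattice in `ℝ^d` is the image of `ℤ^d` under an invertible
linear operator. -/
def IsFullRankLattice {d : ℕ} (L : Set (Rd d)) : Prop :=
  ∃ T : Rd d →ₗ[ℝ] Rd d, Function.Bijective T ∧
    L = T '' {x : Rd d | ∀ i, ∃ n : ℤ, x i = (n : ℝ)}

/-- The multi-indices `k ∈ (ℕ ∪ {0})^d` with `‖k‖ = k₁ + ⋯ + k_d ≤ K`. -/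
def mIdx (d K : ℕ) : Finset (Fin d → ℕ) :=
  (Finset.Iic fun _ => K).filter fun k => (∑ i, k i) ≤ K

/-- Partial derivative in the `i`-th coordinate direction. -/
def pderiv' {d : ℕ} (i : Fin d) (φ : Rd d → ℂ) : Rd d → ℂ :=
  fun x => fderiv ℝ φ x (EuclideanSpace.single i (1:ℝ))

/-- The mixed partial derivative `D^k = ∂^{k₁}_{x₁} ⋯ ∂^{k_d}_{x_d}`. -/
def Dmulti {d : ℕ} (k : Fin d → ℕ) : (Rd d → ℂ) → (Rd d → ℂ) :=
  ((List.finRange d).map fun i => (pderiv' i)^[k i]).foldr (· ∘ ·) id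

/-- The action of `D^k δ_λ` on a test function: `φ ↦ (-1)^{‖k‖} (D^k φ)(λ)`. -/
def dkDelta {d : ℕ} (k : Fin d → ℕ) (lam : Rd d) (φ : SchwartzMap (Rd d) ℂ) : ℂ :=
  (-1 : ℂ) ^ (∑ i, k i) * Dmulti k (⇑φ) lam

/-- The exponential `e^{2πi⟨x,w⟩}`. -/
def e2pi {d : ℕ} (x w : Rd d) : ℂ :=
  Complex.exp (((2 * Real.pi : ℝ) : ℂ) * Complex.I * ((⟪x, w⟫ : ℝ) : ℂ))

/-- A trigonometric polynomial: a finite sum `Σ c_ω e^{2πi⟨x,ω⟩}`. -/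
def IsTrigPoly {d : ℕ} (P : Rd d → ℂ) : Prop :=
  ∃ (n : ℕ) (cc : Fin n → ℂ) (w : Fin n → Rd d),
    ∀ x, P x = ∑ i, cc i * e2pi x (w i)

/-- The monomial `x^m = x₁^{m₁} ⋯ x_d^{m_d}` (as a complex number). -/
def monom {d : ℕ} (m : Fin d → ℕ) (x : Rd d) : ℂ := ((∏ i, (x i) ^ (m i) : ℝ) : ℂ)

/-- The total variation of the pure point measure with masses `b` on the open
ball `B(0,r)`: `Σ_{|γ| < r} |b(γ)|` (as an extended nonnegative real). -/
def ballVar {d : ℕ} (b : Rd d → ℂ) (r : ℝ) : ℝ≥0∞ :=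
  ∑' γ : Rd d, if ‖γ‖ < r then (‖b γ‖₊ : ℝ≥0∞) else 0

/-- The pure point measure `μ = Σ_λ a(λ) δ_λ` belongs to `S*(ℝ^d)` and is
represented there by the tempered distribution `f`: its support is countable,
`Σ_λ |a(λ)| |φ(λ)| < ∞` for every Schwartz function `φ`, and the (automatically
continuous) functional `φ ↦ Σ_λ a(λ) φ(λ)` coincides with `f`. -/
def RepMeasure {d : ℕ} (a : Rd d → ℂ) (f : TemperedDist d) : Prop :=
  {x | a x ≠ 0}.Countable ∧
  (∀ φ : SchwartzMap (Rd d) ℂ, Summable fun lam => ‖a lam‖ * ‖φ lam‖) ∧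
  (∀ φ : SchwartzMap (Rd d) ℂ, f φ = ∑' lam, a lam * φ lam)

/-- A continuous function on `ℝ^d` is almost periodic if for every `ε > 0` its
set of `ε`-almost periods is relatively dense. -/
def APFunction {d : ℕ} (g : Rd d → ℂ) : Prop :=
  Continuous g ∧ ∀ ε > (0:ℝ), RelDense {τ : Rd d | ∀ t, ‖g (t + τ) - g t‖ < ε}

/-- A tempered distribution is almost periodic if for every smooth compactly
supported `ψ` the function `t ↦ f(ψ(t - ·))` is almost periodic. -/
def APDistribution {d : ℕ} (f : TemperedDist d) : Prop :=
  ∀ ψ : Rd d → ℂ, ContDiff ℝ (⊤ : ℕ∞) ψ → HasCompactSupport ψ →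
    ∀ Φ : Rd d → SchwartzMap (Rd d) ℂ, (∀ t y, Φ t y = ψ (t - y)) →
      APFunction fun t => f (Φ t)

/-!
Testing `μ̂` against the Fourier inverse of a bump function rescaled to width `ε` about `x` gives
`μ(x) = lim ∑ c_ε(γ) e^{2πi⟨x,γ⟩}` as `ε → 0`; the growth bound on `|μ̂|` and the decay of
Schwartz functions bound `∑ |c_ε(γ)|` uniformly in `ε`. At a fixed small `ε` this series also shows
that `Λ` is Bohr almost periodic.

Each such series is a matrix coefficient of the unitary representation of `ℝ^d` by multiplication on
`ℓ²` of the frequencies. An ultraproduct of these representations therefore realises the mass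
function itself as `μ(x) = ⟨η, U_x ξ⟩`, although it is far from continuous.

Weak limits of the orbit `U_x ξ` along `x ∈ Λ` escaping the lattice cosets, taken of minimal norm,
have coefficients with lattices of periods. This forces `Λ` into finitely many lattice cosets, and
shows that if `x + p ∈ Λ` for all Bohr-small `p` in a lattice, then `Λ` contains `x + R` for a
sublattice `R`.

The cover may be chosen so that distinct lattices in it are not commensurable. Then, along a coset
of one of them, `Λ` meets the other cosets only sparsely, and almost periodicity shows that having
a full sublattice coset through a point is preserved by a finite-index group of translations. Hence
`Λ` is a disjoint union of cosets of such groups.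
-/

open Filter Topology

section RelativelyDense

variable {E : Type*} [SeminormedAddCommGroup E]

/-- Relative density of a set in a normed group; `RelDense` is the case of `ℝ^d`. The radius is not
required to be positive, which changes nothing. -/
def IsRelativelyDense (S : Set E) : Prop := ∃ R : ℝ, ∀ x, ∃ p ∈ S, ‖x - p‖ ≤ R

theorem IsRelativelyDense.mono {S T : Set E} (hS : IsRelativelyDense S) (hST : S ⊆ T) :
    IsRelativelyDense T :=
  let ⟨R, hR⟩ := hS
  ⟨R, fun x => let ⟨p, hp, h⟩ := hR x; ⟨p, hST hp, h⟩⟩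

theorem IsRelativelyDense.univ : IsRelativelyDense (Set.univ : Set E) :=
  ⟨0, fun x => ⟨x, mem_univ x, by simp⟩⟩

theorem IsRelativelyDense.of_subset_add {K S T : Set E} (hS : IsRelativelyDense S) (hK : K.Finite)
    (h : S ⊆ K + T) : IsRelativelyDense T := by
  obtain ⟨R, hR⟩ := hS
  obtain ⟨B, hB⟩ := hK.isBounded.exists_norm_le
  refine ⟨R + B, fun x => ?_⟩
  obtain ⟨p, hp, hx⟩ := hR x
  obtain ⟨k, hk, t, ht, rfl⟩ := h hp
  refine ⟨t, ht, ?_⟩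
  calc ‖x - t‖ = ‖(x - (k + t)) + k‖ := by congr 1; abel
    _ ≤ ‖x - (k + t)‖ + ‖k‖ := norm_add_le _ _
    _ ≤ R + B := add_le_add hx (hB k hk)

end RelativelyDense

section DiscreteSubgroup

variable {E : Type*} [NormedAddCommGroup E]

theorem discreteTopology_of_le_norm {P : AddSubgroup E} {δ : ℝ} (hδ : 0 < δ)
    (h : ∀ p ∈ P, p ≠ 0 → δ ≤ ‖p‖) : DiscreteTopology P :=
  .of_forall_le_norm hδ fun p hp => h p p.2 fun h0 => hp (Subtype.ext h0)

variable [ProperSpace E]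

theorem finite_inter_closedBall (P : AddSubgroup E) [DiscreteTopology P] (c : E) (R : ℝ) :
    ((P : Set E) ∩ closedBall c R).Finite := by
  rw [inter_comm]
  exact finite_isBounded_inter_isClosed DiscreteTopology.isDiscrete isBounded_closedBall
    AddSubgroup.isClosed_of_discrete

theorem finite_add_inter_closedBall (P : AddSubgroup E) [DiscreteTopology P] {K : Set E}
    (hK : K.Finite) (c : E) (R : ℝ) : ((K + (P : Set E)) ∩ closedBall c R).Finite := by
  refine (hK.biUnion (t := fun k => (k + ·) '' ((P : Set E) ∩ closedBall (c - k) R))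
    fun k _ => (finite_inter_closedBall P _ _).image _).subset ?_
  rintro _ ⟨⟨k, hk, p, hp, rfl⟩, hx⟩
  refine mem_biUnion hk ⟨p, ⟨hp, ?_⟩, rfl⟩
  simpa only [mem_closedBall, dist_eq_norm, sub_sub_eq_add_sub, add_comm p k] using hx

theorem eventually_eq_zero_of_mem_add (P : AddSubgroup E) [DiscreteTopology P] {K : Set E}
    (hK : K.Finite) : ∀ᶠ x in 𝓝 (0 : E), x ∈ K + (P : Set E) → x = 0 := by
  have hfin : (((K + (P : Set E)) ∩ closedBall 0 1) \ {0}).Finite :=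
    (finite_add_inter_closedBall P hK 0 1).sdiff
  filter_upwards [hfin.isClosed.isOpen_compl.mem_nhds (by simp), closedBall_mem_nhds 0 one_pos]
    with x hx hx1 hxK
  by_contra hx0
  exact hx ⟨⟨hxK, hx1⟩, hx0⟩

theorem exists_finite_subset_add {N P : AddSubgroup E} [DiscreteTopology P]
    (hN : IsRelativelyDense (N : Set E)) (hNP : N ≤ P) :
    ∃ F : Set E, F.Finite ∧ (P : Set E) ⊆ F + (N : Set E) := by
  obtain ⟨R, hR⟩ := hN
  refine ⟨P ∩ closedBall 0 R, finite_inter_closedBall P 0 R, fun p hp => ?_⟩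
  obtain ⟨n, hn, h⟩ := hR p
  exact ⟨p - n, ⟨P.sub_mem hp (hNP hn), by simpa using h⟩, n, hn, sub_add_cancel p n⟩

theorem exists_nsmul_mem {N P : AddSubgroup E} [DiscreteTopology P]
    (hN : IsRelativelyDense (N : Set E)) (hNP : N ≤ P) {p : E} (hp : p ∈ P) :
    ∃ n : ℕ, n ≠ 0 ∧ n • p ∈ N := by
  obtain ⟨F, hF, hPF⟩ := exists_finite_subset_add hN hNP
  choose f hf n hn hfn using fun k : ℕ => hPF (P.nsmul_mem hp k)
  obtain ⟨k, l, hkl, hfkl⟩ := hF.exists_lt_map_eq_of_forall_mem hf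
  refine ⟨l - k, (Nat.sub_pos_of_lt hkl).ne', ?_⟩
  have hdiff : (l - k) • p = n l - n k := by
    rw [sub_nsmul p hkl.le, ← hfn l, ← hfn k, hfkl, ← sub_eq_add_neg, add_sub_add_left_eq_sub]
  exact hdiff ▸ N.sub_mem (hn l) (hn k)

end DiscreteSubgroup

section Lattice

variable {E : Type*} [NormedAddCommGroup E] [NormedSpace ℝ E]

/-- A lattice is a discrete subgroup that spans the space; this is the form of `IsZLattice` for a
bare additive subgroup. -/
structure IsLattice (P : AddSubgroup E) : Prop where
  discreteTopology : DiscreteTopology P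
  span_eq_top : Submodule.span ℝ (P : Set E) = ⊤

theorem IsLattice.of_le {P N : AddSubgroup E} (hP : IsLattice P) (hNP : N ≤ P)
    (hN : Submodule.span ℝ (N : Set E) = ⊤) : IsLattice N :=
  have := hP.discreteTopology
  ⟨.of_subset this hNP, hN⟩

theorem isRelativelyDense_span_int {ι : Type*} [Finite ι] (b : Module.Basis ι ℝ E) :
    IsRelativelyDense (Submodule.span ℤ (range b) : Set E) :=
  have := Fintype.ofFinite ι
  ⟨∑ i, ‖b i‖, fun x => ⟨ZSpan.floor b x, (ZSpan.floor b x).2, ZSpan.norm_fract_le b x⟩⟩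

variable [FiniteDimensional ℝ E]

theorem eventually_lt_norm_smul_sub {M : Submodule ℝ E} {v : E} (hv : v ∉ M) (w : E) (R : ℝ) :
    ∀ᶠ t : ℝ in atTop, ∀ y ∈ M, R < ‖t • v - (w + y)‖ := by
  obtain ⟨f, hfv, hfM⟩ := M.exists_le_ker_of_notMem hv
  let F : E →L[ℝ] ℝ := LinearMap.toContinuousLinearMap f
  have hF : ∀ᶠ t : ℝ in atTop, ‖F‖ * R < |t * F v - F w| := by
    have hlim : Tendsto (fun t : ℝ => |t * F v - F w|) atTop atTop := by
      rcases lt_or_gt_of_ne (show F v ≠ 0 from hfv) with h | h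
      · exact tendsto_abs_atBot_atTop.comp
          (tendsto_atBot_add_const_right _ _ (tendsto_id.atTop_mul_const_of_neg h))
      · exact tendsto_abs_atTop_atTop.comp
          (tendsto_atTop_add_const_right _ _ (tendsto_id.atTop_mul_const h))
    exact hlim.eventually_gt_atTop _
  filter_upwards [hF] with t ht y hy
  have hFy : F y = 0 := hfM hy
  have hle := F.le_opNorm (t • v - (w + y))
  rw [map_sub, map_add, map_smul, hFy, add_zero, smul_eq_mul, Real.norm_eq_abs] at hle
  exact lt_of_mul_lt_mul_left (ht.trans_le hle) (norm_nonneg F)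

theorem not_isRelativelyDense_biUnion_vadd {ι : Type*} (s : Finset ι) (w : ι → E)
    (M : ι → Submodule ℝ E) (hM : ∀ i ∈ s, M i ≠ ⊤) :
    ¬ IsRelativelyDense (⋃ i ∈ s, w i +ᵥ (M i : Set E)) := by
  classical
  rintro ⟨R, hR⟩
  obtain ⟨v, hv⟩ : ∃ v : E, ∀ i ∈ s, v ∉ M i := by
    have hne := Subspace.biUnion_ne_univ_of_top_notMem (s := s.image M) <| by
      simpa only [Finset.mem_image, not_exists, not_and] using hM
    simpa only [Finset.mem_image, iUnion_exists, biUnion_and', iUnion_iUnion_eq_right,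
      ne_univ_iff_exists_notMem, mem_iUnion, not_exists, SetLike.mem_coe] using hne
  obtain ⟨t, ht⟩ := ((Filter.eventually_all_finset s).2 fun i hi =>
    eventually_lt_norm_smul_sub (hv i hi) (w i) R).exists
  obtain ⟨p, hp, hpR⟩ := hR (t • v)
  simp only [mem_iUnion] at hp
  obtain ⟨i, hi, y, hy, rfl⟩ := hp
  exact (ht i hi y hy).not_ge hpR

theorem isRelativelyDense_iff_span_eq_top {N : AddSubgroup E} :
    IsRelativelyDense (N : Set E) ↔ Submodule.span ℝ (N : Set E) = ⊤ := by
  constructor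
  · intro h
    by_contra hne
    refine not_isRelativelyDense_biUnion_vadd {()} (fun _ => (0 : E))
      (fun _ => Submodule.span ℝ (N : Set E)) (fun _ _ => hne) (h.mono ?_)
    simpa only [Finset.mem_singleton, iUnion_true, iUnion_const, zero_vadd] using
      Submodule.subset_span (R := ℝ) (s := (N : Set E))
  · intro h
    let b := Module.Basis.ofSpan h.ge
    have := Fintype.ofFinite ((linearIndepOn_empty ℝ id).extend (empty_subset (N : Set E)))
    have hb : Submodule.span ℤ (range b) ≤ AddSubgroup.toIntSubmodule N :=
      Submodule.span_le.2 (Module.Basis.ofSpan_subset h.ge)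
    exact (isRelativelyDense_span_int b).mono hb

theorem exists_linearIndependent_span_int_eq (M : Submodule ℤ E) [DiscreteTopology M] :
    ∃ (k : ℕ) (v : Fin k → E), LinearIndependent ℝ v ∧ Submodule.span ℤ (range v) = M := by
  let v : Fin (Module.finrank ℤ M) → E := M.subtype ∘ Module.finBasis ℤ M
  have hspan : Submodule.span ℤ (range v) = M := by
    rw [range_comp, ← Submodule.map_span, Module.Basis.span_eq, Submodule.map_top,
      Submodule.range_subtype]
  refine ⟨_, v, ?_, hspan⟩
  rw [linearIndependent_iff_card_eq_finrank_span, Fintype.card_fin,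
    Real.finrank_eq_int_finrank_of_discrete (by rw [hspan]; infer_instance), Set.finrank, hspan]

namespace IsLattice

variable {P Q N : AddSubgroup E}

theorem isRelativelyDense (hP : IsLattice P) : IsRelativelyDense (P : Set E) :=
  isRelativelyDense_iff_span_eq_top.2 hP.span_eq_top

theorem of_subset_add (hP : IsLattice P) (hNP : N ≤ P) {K : Set E} (hK : K.Finite)
    (h : (P : Set E) ⊆ K + N) : IsLattice N :=
  hP.of_le hNP (isRelativelyDense_iff_span_eq_top.1 (hP.isRelativelyDense.of_subset_add hK h))

theorem sup (hP : IsLattice P) (hQ : IsLattice Q) (h : IsLattice (P ⊓ Q)) : IsLattice (P ⊔ Q) := by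
  have := hP.discreteTopology
  have := hQ.discreteTopology
  have := h.discreteTopology
  obtain ⟨F, hF, hPF⟩ := exists_finite_subset_add h.isRelativelyDense inf_le_left
  obtain ⟨G, hG, hQG⟩ := exists_finite_subset_add h.isRelativelyDense inf_le_right
  have hsup : ((P ⊔ Q : AddSubgroup E) : Set E) ⊆ (F + G) + (P ⊓ Q : AddSubgroup E) := by
    intro x hx
    obtain ⟨p, hp, q, hq, rfl⟩ := AddSubgroup.mem_sup.1 hx
    obtain ⟨f, hf, n, hn, rfl⟩ := hPF hp
    obtain ⟨g, hg, m, hm, rfl⟩ := hQG hq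
    exact ⟨f + g, add_mem_add hf hg, n + m, add_mem hn hm, add_add_add_comm f g n m⟩
  obtain ⟨ε, hε, hzero⟩ :=
    Metric.eventually_nhds_iff.1 (eventually_eq_zero_of_mem_add (P ⊓ Q) (hF.add hG))
  refine ⟨discreteTopology_of_le_norm hε fun x hx hx0 => ?_, top_le_iff.1 ?_⟩
  · by_contra! hlt
    exact hx0 (hzero (by rwa [dist_zero_right]) (hsup hx))
  · exact hP.span_eq_top.ge.trans (Submodule.span_mono (SetLike.coe_subset_coe.2 le_sup_left))

theorem inf_of_discreteTopology_sup (hP : IsLattice P) (hQ : IsLattice Q)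
    [DiscreteTopology (P ⊔ Q : AddSubgroup E)] : IsLattice (P ⊓ Q) := by
  refine hP.of_le inf_le_left (top_le_iff.1 (hP.span_eq_top.ge.trans (Submodule.span_le.2 ?_)))
  intro p hp
  obtain ⟨n, hn, hnp⟩ := exists_nsmul_mem hQ.isRelativelyDense le_sup_right
    (le_sup_left (a := P) hp)
  have hmem : (n : ℝ) • p ∈ Submodule.span ℝ ((P ⊓ Q : AddSubgroup E) : Set E) := by
    rw [Nat.cast_smul_eq_nsmul]
    exact Submodule.subset_span ⟨P.nsmul_mem hp n, hnp⟩
  exact (Submodule.smul_mem_iff _ (Nat.cast_ne_zero.2 hn)).1 hmem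

theorem exists_ne_norm_sub_lt (hP : IsLattice P) (hQ : IsLattice Q) (h : ¬ IsLattice (P ⊓ Q))
    {δ : ℝ} (hδ : 0 < δ) : ∃ p ∈ P, ∃ q ∈ Q, p ≠ q ∧ ‖p - q‖ < δ := by
  by_contra! hle
  have : DiscreteTopology (P ⊔ Q : AddSubgroup E) := by
    refine discreteTopology_of_le_norm hδ fun x hx hx0 => ?_
    obtain ⟨p, hp, q, hq, rfl⟩ := AddSubgroup.mem_sup.1 hx
    simpa only [sub_neg_eq_add] using
      hle p hp (-q) (Q.neg_mem hq) fun h => hx0 (add_eq_zero_iff_eq_neg.2 h)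
  exact h (hP.inf_of_discreteTopology_sup hQ)

theorem exists_basis (hP : IsLattice P) :
    ∃ b : Module.Basis (Fin (Module.finrank ℝ E)) ℝ E,
      Submodule.span ℤ (range b) = AddSubgroup.toIntSubmodule P := by
  have : DiscreteTopology (AddSubgroup.toIntSubmodule P) := hP.discreteTopology
  have : IsZLattice ℝ (AddSubgroup.toIntSubmodule P) := ⟨hP.span_eq_top⟩
  let b := Module.finBasisOfFinrankEq ℤ (AddSubgroup.toIntSubmodule P) (ZLattice.rank ℝ _)
  exact ⟨b.ofZLatticeBasis ℝ, b.ofZLatticeBasis_span ℝ⟩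

theorem exists_ge_of_discreteTopology (N : AddSubgroup E) [DiscreteTopology N] :
    ∃ P, IsLattice P ∧ N ≤ P := by
  have : DiscreteTopology (AddSubgroup.toIntSubmodule N) := ‹DiscreteTopology N›
  obtain ⟨k, v, hv, hN⟩ := exists_linearIndependent_span_int_eq (AddSubgroup.toIntSubmodule N)
  let b := Module.Basis.extend hv.linearIndepOn_id
  have : Finite (hv.linearIndepOn_id.extend (subset_univ (range v))) := Module.Finite.finite_basis b
  refine ⟨(Submodule.span ℤ (range b)).toAddSubgroup, ⟨inferInstance, ZSpan.span_top b⟩, ?_⟩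
  have hle : AddSubgroup.toIntSubmodule N ≤ Submodule.span ℤ (range b) := by
    rw [← hN, Module.Basis.range_extend]
    exact Submodule.span_mono (hv.linearIndepOn_id.subset_extend _)
  exact hle

end IsLattice

end Lattice

section BohrTopology

variable {E : Type*} [NormedAddCommGroup E] [InnerProductSpace ℝ E]

/-- The character `x ↦ e^{2πi⟨x, γ⟩}` of a real inner product space. -/
def bohrChar (γ : E) : AddChar E Circle :=
  Real.fourierChar.compAddMonoidHom ((innerₗ E).flip γ).toAddMonoidHom

theorem bohrChar_apply (γ x : E) : bohrChar γ x = Real.fourierChar ⟪x, γ⟫ := rfl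

variable (E) in
/-- The neighbourhood filter of `0` in the Bohr topology, the coarsest topology making every
character continuous. -/
def bohrNhds : Filter E := ⨅ γ : E, comap (bohrChar γ) (𝓝 1)

theorem tendsto_bohrNhds {α : Type*} {f : α → E} {l : Filter α} :
    Tendsto f l (bohrNhds E) ↔ ∀ γ, Tendsto (fun x => bohrChar γ (f x)) l (𝓝 1) := by
  simp only [bohrNhds, tendsto_iInf, tendsto_comap_iff, Function.comp_def]

theorem tendsto_bohrChar (γ : E) : Tendsto (bohrChar γ) (bohrNhds E) (𝓝 1) :=
  tendsto_bohrNhds.1 tendsto_id γ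

theorem pure_zero_le_bohrNhds : pure 0 ≤ bohrNhds E :=
  have h : Tendsto id (pure 0) (bohrNhds E) := tendsto_bohrNhds.2 fun γ => by
    simpa only [id_eq, AddChar.map_zero_eq_one] using tendsto_pure_nhds (bohrChar γ) (0 : E)
  h

theorem bohrNhds_inf_principal_neBot (P : AddSubgroup E) :
    (bohrNhds E ⊓ 𝓟 (P : Set E)).NeBot :=
  neBot_of_le (f := pure (0 : E)) (le_inf pure_zero_le_bohrNhds (by simp))

theorem tendsto_add_bohrNhds :
    Tendsto (fun p : E × E => p.1 + p.2) (bohrNhds E ×ˢ bohrNhds E) (bohrNhds E) :=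
  tendsto_bohrNhds.2 fun γ => by
    simpa only [AddChar.map_add_eq_mul, one_mul, Function.comp_def] using
      ((tendsto_bohrChar γ).comp tendsto_fst).mul ((tendsto_bohrChar γ).comp tendsto_snd)

theorem tendsto_neg_bohrNhds : Tendsto (fun x : E => -x) (bohrNhds E) (bohrNhds E) :=
  tendsto_bohrNhds.2 fun γ => by
    simpa only [AddChar.map_neg_eq_inv, inv_one] using (tendsto_bohrChar γ).inv

/-- Precompactness of the Bohr topology, in terms of ultrafilters. -/
theorem tendsto_sub_ultrafilter_bohrNhds (U : Ultrafilter E) :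
    Tendsto (fun p : E × E => p.1 - p.2) ((U : Filter E) ×ˢ (U : Filter E)) (bohrNhds E) :=
  tendsto_bohrNhds.2 fun γ => by
    obtain ⟨c, -, hc⟩ := isCompact_univ.ultrafilter_le_nhds (U.map (bohrChar γ)) (by simp)
    have hlim : Tendsto (bohrChar γ) U (𝓝 c) := hc
    simpa only [AddChar.map_sub_eq_div, div_self', Function.comp_def] using
      (hlim.comp tendsto_fst).div' (hlim.comp tendsto_snd)

theorem exists_finite_biUnion_mem {α ι : Type*} {F : Filter α} {S : ι → Set α}
    (h : ∀ U : Ultrafilter α, U ≤ F → ∃ i, S i ∈ U) :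
    ∃ t : Set ι, t.Finite ∧ (⋃ i ∈ t, S i) ∈ F := by
  let G : Filter α := comk (fun A => ∃ t : Set ι, t.Finite ∧ Aᶜ ∪ ⋃ i ∈ t, S i ∈ F)
    ⟨∅, finite_empty, by simp⟩
    (fun A ⟨t, ht, hA⟩ B hBA =>
      ⟨t, ht, mem_of_superset hA (union_subset_union_left _ (compl_subset_compl.2 hBA))⟩)
    (fun A ⟨t, ht, hA⟩ B ⟨u, hu, hB⟩ => ⟨t ∪ u, ht.union hu, by
      rw [biUnion_union]
      filter_upwards [hA, hB] with x hxA hxB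
      simp only [mem_union, mem_compl_iff] at hxA hxB ⊢
      tauto⟩)
  by_contra! hF
  have hG : G.NeBot := by
    refine neBot_iff.2 fun hbot => ?_
    obtain ⟨t, ht, htF⟩ := mem_comk.1 (empty_mem_iff_bot.2 hbot)
    exact hF t ht (by simpa using htF)
  obtain ⟨U, hU⟩ := Ultrafilter.exists_le G
  have hGF : G ≤ F := fun s hs =>
    mem_comk.2 ⟨∅, finite_empty, mem_of_superset hs (by rw [compl_compl]; exact subset_union_left)⟩
  obtain ⟨i, hi⟩ := h U (hU.trans hGF)
  exact Ultrafilter.compl_notMem_iff.2 hi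
    (hU (mem_comk.2 ⟨{i}, finite_singleton i, by simp⟩))

theorem exists_finite_subset_add_inter_bohrNhds (P : AddSubgroup E) {T : Set E}
    (hT : T ∈ bohrNhds E) :
    ∃ F : Set E, F.Finite ∧ (P : Set E) ⊆ F + ((P : Set E) ∩ T) := by
  obtain ⟨F, hF, hcov⟩ := exists_finite_biUnion_mem (F := 𝓟 (P : Set E))
      (S := fun x => x +ᵥ ((P : Set E) ∩ T)) fun U hU => by
    obtain ⟨A, hA, hsub⟩ := mem_prod_same_iff.1 (tendsto_sub_ultrafilter_bohrNhds U hT)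
    have hAP : A ∩ P ∈ U := inter_mem hA (le_principal_iff.1 hU)
    obtain ⟨x, hxA, hxP⟩ := U.nonempty_of_mem hAP
    refine ⟨x, mem_of_superset hAP fun y hy => mem_vadd_set.2 ⟨y - x, ⟨?_, ?_⟩, ?_⟩⟩
    · exact P.sub_mem hy.2 hxP
    · exact hsub (mk_mem_prod hy.1 hxA)
    · exact add_sub_cancel x y
  exact ⟨F, hF, (mem_principal.1 hcov).trans (iUnion_vadd_set F _).subset⟩

theorem isRelativelyDense_of_mem_bohrNhds {T : Set E} (hT : T ∈ bohrNhds E) :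
    IsRelativelyDense T := by
  obtain ⟨F, hF, h⟩ := exists_finite_subset_add_inter_bohrNhds ⊤ hT
  exact (IsRelativelyDense.univ.of_subset_add hF h).mono inter_subset_right

variable [FiniteDimensional ℝ E]

theorem IsLattice.isRelativelyDense_inter_bohrNhds {P : AddSubgroup E} (hP : IsLattice P)
    {T : Set E} (hT : T ∈ bohrNhds E) : IsRelativelyDense ((P : Set E) ∩ T) := by
  obtain ⟨F, hF, h⟩ := exists_finite_subset_add_inter_bohrNhds P hT
  exact hP.isRelativelyDense.of_subset_add hF h

theorem eventually_bohrNhds_abs_sub_round_lt (f : Module.Dual ℝ E) {δ : ℝ} (hδ : 0 < δ) :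
    ∀ᶠ x in bohrNhds E, |f x - round (f x)| < δ := by
  let γ := (InnerProductSpace.toDual ℝ E).symm (LinearMap.toContinuousLinearMap f)
  have hγ : ∀ x, ⟪x, γ⟫ = f x := fun x => by
    rw [real_inner_comm, InnerProductSpace.toDual_symm_apply, LinearMap.coe_toContinuousLinearMap']
  have hlim : Tendsto (fun x => (f x : UnitAddCircle)) (bohrNhds E) (𝓝 0) := by
    rw [(AddCircle.homeomorphCircle one_ne_zero).isInducing.tendsto_nhds_iff]
    simp only [Function.comp_def, AddCircle.homeomorphCircle_apply, AddCircle.toCircle_zero,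
      AddCircle.toCircle_apply_mk, div_one, ← hγ, ← Real.fourierChar_apply']
    exact tendsto_bohrChar γ
  filter_upwards [hlim.norm.eventually_lt_const (by simpa using hδ)] with x hx
  rwa [UnitAddCircle.norm_eq] at hx

theorem IsLattice.eventually_bohrNhds_exists_norm_sub_lt {P : AddSubgroup E} (hP : IsLattice P)
    {δ : ℝ} (hδ : 0 < δ) : ∀ᶠ x in bohrNhds E, ∃ p ∈ P, ‖x - p‖ < δ := by
  obtain ⟨b, hb⟩ := hP.exists_basis
  set B := ∑ i, ‖b i‖
  have : 0 ≤ B := Finset.sum_nonneg fun _ _ => norm_nonneg _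
  have hround : ∀ᶠ x in bohrNhds E, ∀ i, |b.coord i x - round (b.coord i x)| < δ / (B + 1) :=
    eventually_all.2 fun i => eventually_bohrNhds_abs_sub_round_lt (b.coord i) (by positivity)
  filter_upwards [hround] with x hx
  have hmem : ∑ i, round (b.coord i x) • b i ∈ AddSubgroup.toIntSubmodule P :=
    hb ▸ Submodule.sum_smul_mem _ _ fun i _ => Submodule.subset_span (mem_range_self i)
  refine ⟨_, hmem, ?_⟩
  have hsub : x - ∑ i, round (b.coord i x) • b i
      = ∑ i, (b.coord i x - round (b.coord i x)) • b i := by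
    simp only [sub_smul, Finset.sum_sub_distrib, Int.cast_smul_eq_zsmul, Module.Basis.coord_apply,
      b.sum_repr]
  calc ‖x - ∑ i, round (b.coord i x) • b i‖
      ≤ ∑ i, |b.coord i x - round (b.coord i x)| * ‖b i‖ := by
        rw [hsub]
        exact norm_sum_le_of_le _ fun i _ => (norm_smul _ _).le
    _ ≤ ∑ i, δ / (B + 1) * ‖b i‖ := by gcongr with i; exact (hx i).le
    _ = δ / (B + 1) * B := (Finset.mul_sum _ _ _).symm
    _ < δ / (B + 1) * (B + 1) := by gcongr; linarith
    _ = δ := div_mul_cancel₀ δ (by positivity)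

end BohrTopology

section WeakConvergence

variable {H : Type*} [NormedAddCommGroup H] [InnerProductSpace ℂ H] [CompleteSpace H] {α : Type*}

/-- The Riesz embedding of a Hilbert space into its weak dual: `weakEmbedding ∘ g` converges to
`weakEmbedding w` exactly when `g` converges weakly to `w`. -/
def weakEmbedding (h : H) : WeakDual ℂ H :=
  StrongDual.toWeakDual (InnerProductSpace.toDual ℂ H h)

theorem tendsto_weakEmbedding_iff_inner_right {g : α → H} {l : Filter α} {w : H} :
    Tendsto (fun x => weakEmbedding (g x)) l (𝓝 (weakEmbedding w)) ↔
      ∀ y, Tendsto (fun x => inner ℂ (g x) y) l (𝓝 (inner ℂ w y)) :=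
  tendsto_iff_forall_eval_tendsto_topDualPairing

theorem tendsto_weakEmbedding_iff_inner_left {g : α → H} {l : Filter α} {w : H} :
    Tendsto (fun x => weakEmbedding (g x)) l (𝓝 (weakEmbedding w)) ↔
      ∀ y, Tendsto (fun x => inner ℂ y (g x)) l (𝓝 (inner ℂ y w)) := by
  rw [tendsto_weakEmbedding_iff_inner_right]
  refine forall_congr' fun y => ⟨fun h => ?_, fun h => ?_⟩ <;>
    simpa only [Function.comp_def, inner_conj_symm] using
      (Complex.continuous_conj.tendsto _).comp h

theorem weakEmbedding_surjective : Function.Surjective (weakEmbedding : H → WeakDual ℂ H) :=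
  StrongDual.toWeakDual.surjective.comp (InnerProductSpace.toDual ℂ H).surjective

theorem norm_toStrongDual_weakEmbedding (h : H) :
    ‖WeakDual.toStrongDual (weakEmbedding h)‖ = ‖h‖ :=
  (InnerProductSpace.toDual ℂ H).norm_map h

theorem weakEmbedding_mem_closedBall {h : H} {C : ℝ} :
    weakEmbedding h ∈ (WeakDual.toStrongDual ⁻¹' closedBall 0 C : Set (WeakDual ℂ H)) ↔
      ‖h‖ ≤ C := by
  rw [mem_preimage, mem_closedBall_zero_iff, norm_toStrongDual_weakEmbedding]

theorem exists_tendsto_weakEmbedding (V : Ultrafilter α) {g : α → H} {C : ℝ}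
    (hg : ∀ x, ‖g x‖ ≤ C) :
    ∃ w, Tendsto (fun x => weakEmbedding (g x)) V (𝓝 (weakEmbedding w)) := by
  obtain ⟨φ, -, hφ⟩ := (WeakDual.isCompact_closedBall (0 : StrongDual ℂ H) C).ultrafilter_le_nhds
    (V.map fun x => weakEmbedding (g x))
    (le_principal_iff.2 (Ultrafilter.mem_map.2
      (univ_mem' fun x => weakEmbedding_mem_closedBall.2 (hg x))))
  obtain ⟨w, rfl⟩ := weakEmbedding_surjective φ
  exact ⟨w, hφ⟩

/-- The weak cluster points of `g` along `F`. -/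
def weakClusterSet (F : Filter α) (g : α → H) : Set H :=
  {w | MapClusterPt (weakEmbedding w) F fun x => weakEmbedding (g x)}

theorem mem_weakClusterSet_of_tendsto {F : Filter α} {g : α → H} {β : Type*} {l : Filter β}
    [l.NeBot] {k : β → H} {w : H} (hk : ∀ᶠ x in l, k x ∈ weakClusterSet F g)
    (hw : Tendsto (fun x => weakEmbedding (k x)) l (𝓝 (weakEmbedding w))) :
    w ∈ weakClusterSet F g :=
  isClosed_setOfPred_clusterPt.mem_of_tendsto hw hk

theorem exists_norm_le_of_mem_weakClusterSet (F : Filter α) [F.NeBot] {g : α → H} {C : ℝ}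
    (hg : ∀ x, ‖g x‖ ≤ C) :
    ∃ w ∈ weakClusterSet F g, ∀ w' ∈ weakClusterSet F g, ‖w‖ ≤ ‖w'‖ := by
  let A : Set (WeakDual ℂ H) := {φ | MapClusterPt φ F fun x => weakEmbedding (g x)}
  have hsub : A ⊆ WeakDual.toStrongDual ⁻¹' closedBall 0 C := fun φ hφ => by
    obtain ⟨V, -, hV⟩ := mapClusterPt_iff_ultrafilter.1 hφ
    exact (WeakDual.isClosed_closedBall 0 C).mem_of_tendsto hV
      (univ_mem' fun x => weakEmbedding_mem_closedBall.2 (hg x))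
  have hA : IsCompact A :=
    (WeakDual.isCompact_closedBall 0 C).of_isClosed_subset isClosed_setOfPred_clusterPt hsub
  have hne : A.Nonempty := by
    obtain ⟨w, hw⟩ := exists_tendsto_weakEmbedding (Ultrafilter.of F) hg
    exact ⟨_, mapClusterPt_iff_ultrafilter.2 ⟨_, Ultrafilter.of_le F, hw⟩⟩
  have hlsc : LowerSemicontinuous fun φ : WeakDual ℂ H => ‖WeakDual.toStrongDual φ‖ :=
    lowerSemicontinuous_iff_isClosed_preimage.2 fun r => by
      convert WeakDual.isClosed_closedBall (0 : StrongDual ℂ H) r using 1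
      ext φ
      rw [mem_preimage, mem_Iic, mem_preimage, mem_closedBall_zero_iff]
  obtain ⟨φ, hφ, hmin⟩ := (hlsc.lowerSemicontinuousOn A).exists_isMinOn hne hA
  obtain ⟨w, rfl⟩ := weakEmbedding_surjective φ
  refine ⟨w, hφ, fun w' hw' => ?_⟩
  simpa only [norm_toStrongDual_weakEmbedding] using isMinOn_iff.1 hmin (weakEmbedding w') hw'

theorem tendsto_of_tendsto_weakEmbedding {l : Filter α} {g : α → H} {w : H}
    (hg : ∀ x, ‖g x‖ ≤ ‖w‖) (hw : Tendsto (fun x => weakEmbedding (g x)) l (𝓝 (weakEmbedding w))) :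
    Tendsto g l (𝓝 w) := by
  rw [tendsto_iff_norm_sub_tendsto_zero]
  have hre : Tendsto (fun x => RCLike.re (inner ℂ (g x) w)) l (𝓝 (‖w‖ ^ 2)) := by
    simpa only [Function.comp_def, inner_self_eq_norm_sq] using
      (RCLike.continuous_re.tendsto _).comp (tendsto_weakEmbedding_iff_inner_right.1 hw w)
  have hlim : Tendsto (fun x => 2 * (‖w‖ ^ 2 - RCLike.re (inner ℂ (g x) w))) l (𝓝 0) := by
    have h := (hre.const_sub (‖w‖ ^ 2)).const_mul 2
    rwa [sub_self, mul_zero] at h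
  have hsq : Tendsto (fun x => ‖g x - w‖ ^ 2) l (𝓝 0) := by
    refine squeeze_zero (fun x => by positivity) (fun x => ?_) hlim
    have hle : ‖g x‖ ^ 2 ≤ ‖w‖ ^ 2 := by gcongr; exact hg x
    rw [@norm_sub_sq ℂ]
    linarith
  simpa only [Real.sqrt_sq (norm_nonneg _), Real.sqrt_zero] using hsq.sqrt

end WeakConvergence

section UnitaryRepresentation

variable {G : Type*} [AddCommGroup G]
variable {H : Type*} [NormedAddCommGroup H] [InnerProductSpace ℂ H] (U : AddChar G (H →ₗᵢ[ℂ] H))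

theorem addChar_zero_apply (h : H) : U 0 h = h := by
  rw [U.map_zero_eq_one, LinearIsometry.coe_one, id_eq]

theorem addChar_add_apply (x y : G) (h : H) : U (x + y) h = U x (U y h) := by
  rw [U.map_add_eq_mul, LinearIsometry.coe_mul, Function.comp_apply]

theorem inner_addChar_apply_right (x : G) (f g : H) :
    inner ℂ f (U x g) = inner ℂ (U (-x) f) g := by
  rw [← (U x).inner_map_map (U (-x) f) g, ← addChar_add_apply, add_neg_cancel, addChar_zero_apply]

/-- The matrix coefficient `x ↦ ⟨η, U_x ξ⟩` of a unitary representation. -/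
def matrixCoeff (η ξ : H) (x : G) : ℂ := inner ℂ η (U x ξ)

variable {U}

theorem ne_zero_iff_eventually_ne_zero {α : Type*} {l : Filter α} [l.NeBot] {f : α → ℂ} {z : ℂ}
    {ε : ℝ} (hε : 0 < ε) (hf : ∀ x, f x ≠ 0 → ε ≤ ‖f x‖) (h : Tendsto f l (𝓝 z)) :
    z ≠ 0 ↔ ∀ᶠ x in l, f x ≠ 0 :=
  ⟨h.eventually_ne, fun hev => norm_pos_iff.1
    (hε.trans_le (ge_of_tendsto h.norm (hev.mono fun x => hf x)))⟩

variable {η ξ : H} {ε : ℝ}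

theorem sub_mem_stabilizer_of_norm_sub_lt (hgap : ∀ x, matrixCoeff U η ξ x ≠ 0 →
    ε ≤ ‖matrixCoeff U η ξ x‖) {x y : G} (h : ‖η‖ * ‖U x ξ - U y ξ‖ < ε) :
    x - y ∈ AddAction.stabilizer G (Function.support (matrixCoeff U η ξ)) := by
  refine AddAction.mem_stabilizer_set.2 fun z => ?_
  have hlt : ‖matrixCoeff U η ξ (x - y + z) - matrixCoeff U η ξ z‖ < ε := by
    have heq : matrixCoeff U η ξ (x - y + z) - matrixCoeff U η ξ z
        = inner ℂ η (U (z - y) (U x ξ - U y ξ)) := by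
      rw [map_sub, ← addChar_add_apply, ← addChar_add_apply, inner_sub_right, sub_add_cancel,
        show z - y + x = x - y + z by abel]
      rfl
    rw [heq]
    exact (norm_inner_le_norm _ _).trans_lt (by rwa [(U (z - y)).norm_map])
  simp only [vadd_eq_add, Function.mem_support]
  constructor <;> intro h' h0
  · rw [h0, sub_zero] at hlt
    exact (hgap _ h').not_gt hlt
  · rw [h0, zero_sub, norm_neg] at hlt
    exact (hgap _ h').not_gt hlt

variable [CompleteSpace H]

theorem exists_mem_closure_span_matrixCoeff_eq (U : AddChar G (H →ₗᵢ[ℂ] H)) (η ξ : H) :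
    ∃ ξ' ∈ closure (Submodule.span ℂ (range fun x => U x η) : Set H),
      matrixCoeff U η ξ' = matrixCoeff U η ξ := by
  set K := (Submodule.span ℂ (range fun x => U x η)).topologicalClosure
  refine ⟨K.starProjection ξ, K.starProjection_apply_mem ξ, funext fun x => ?_⟩
  have hx : U (-x) η ∈ K := Submodule.le_topologicalClosure _ (Submodule.subset_span ⟨-x, rfl⟩)
  rw [matrixCoeff, matrixCoeff, inner_addChar_apply_right, inner_addChar_apply_right,
    ← Submodule.inner_starProjection_left_eq_right, Submodule.starProjection_eq_self_iff.2 hx]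

theorem tendsto_weakEmbedding_addChar_apply {α : Type*} {l : Filter α} {g : α → H} {w : H}
    (h : Tendsto (fun x => weakEmbedding (g x)) l (𝓝 (weakEmbedding w))) (y : G) :
    Tendsto (fun x => weakEmbedding (U y (g x))) l (𝓝 (weakEmbedding (U y w))) := by
  rw [tendsto_weakEmbedding_iff_inner_left] at h ⊢
  intro z
  simpa only [inner_addChar_apply_right] using h (U (-y) z)

theorem tendsto_matrixCoeff_add {l : Filter G} {ξ' : H}
    (h : Tendsto (fun x => weakEmbedding (U x ξ)) l (𝓝 (weakEmbedding ξ'))) (y : G) :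
    Tendsto (fun x => matrixCoeff U η ξ (x + y)) l (𝓝 (matrixCoeff U η ξ' y)) := by
  refine (tendsto_weakEmbedding_iff_inner_left.1
    (tendsto_weakEmbedding_addChar_apply h y) η).congr fun x => ?_
  rw [add_comm, matrixCoeff, addChar_add_apply]

theorem addChar_apply_mem_weakClusterSet {l F : Filter G} [l.NeBot] {ξ' : H} {y : G}
    (h : Tendsto (fun x => weakEmbedding (U x ξ)) l (𝓝 (weakEmbedding ξ')))
    (hy : Tendsto (fun x => x + y) l F) : U y ξ' ∈ weakClusterSet F fun x => U x ξ := by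
  refine MapClusterPt.of_comp hy (Tendsto.mapClusterPt ?_)
  refine (tendsto_weakEmbedding_addChar_apply h y).congr fun x => ?_
  simp only [Function.comp_apply, add_comm x y, addChar_add_apply]

theorem mem_weakClusterSet_trans {F : Filter G}
    (hF : Tendsto (fun p : G × G => p.1 + p.2) (F ×ˢ F) F) {ξ' w : H}
    (hξ' : ξ' ∈ weakClusterSet F fun x => U x ξ) (hw : w ∈ weakClusterSet F fun x => U x ξ') :
    w ∈ weakClusterSet F fun x => U x ξ := by
  obtain ⟨V, hV, hlim⟩ := mapClusterPt_iff_ultrafilter.1 hξ'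
  refine mapClusterPt_iff_frequently.2 fun s hs hnot => ?_
  obtain ⟨s', hs's, hs'o, hws'⟩ := mem_nhds_iff.1 hs
  have hfar : ∀ᶠ y in F, ∀ᶠ x in V, weakEmbedding (U (y + x) ξ) ∉ s :=
    (hF.eventually hnot).curry.mono fun y hy => hV hy
  obtain ⟨y, hys, hy⟩ :=
    ((mapClusterPt_iff_frequently.1 hw s' (hs'o.mem_nhds hws')).and_eventually hfar).exists
  have hnear : ∀ᶠ x in V, weakEmbedding (U y (U x ξ)) ∈ s' :=
    tendsto_weakEmbedding_addChar_apply hlim y (hs'o.mem_nhds hys)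
  obtain ⟨x, hxs, hx⟩ := (hnear.and hy).exists
  exact hx (hs's (by rwa [addChar_add_apply]))

/-- By minimality of `‖ξ'‖` no norm is lost in weak limits of its orbit, so these limits are
strong and the orbit is Cauchy along ultrafilters. -/
theorem exists_finite_sub_mem_stabilizer {F F' : Filter G} {ξ₀ : H}
    (hmin : ∀ w ∈ weakClusterSet F fun x => U x ξ₀, ‖ξ‖ ≤ ‖w‖)
    (hclosed : (weakClusterSet F' fun x => U x ξ) ⊆ weakClusterSet F fun x => U x ξ₀)
    (hε : 0 < ε) (hgap : ∀ x, matrixCoeff U η ξ x ≠ 0 → ε ≤ ‖matrixCoeff U η ξ x‖)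
    {D : Set G} (hD : D ∈ F') :
    ∃ t : Set G, t.Finite ∧ ∀ᶠ x in F', ∃ y ∈ t, y ∈ D ∧
      x - y ∈ AddAction.stabilizer G (Function.support (matrixCoeff U η ξ)) := by
  obtain ⟨t, ht, hcov⟩ := exists_finite_biUnion_mem (F := F') (S := fun y => {x | y ∈ D ∧
    x - y ∈ AddAction.stabilizer G (Function.support (matrixCoeff U η ξ))}) fun V hV => by
      obtain ⟨w, hw⟩ := exists_tendsto_weakEmbedding V fun x => ((U x).norm_map ξ).le
      have hwF : w ∈ weakClusterSet F fun x => U x ξ₀ :=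
        hclosed (mapClusterPt_iff_ultrafilter.2 ⟨V, hV, hw⟩)
      have hstrong : Tendsto (fun x => U x ξ) V (𝓝 w) :=
        tendsto_of_tendsto_weakEmbedding
          (fun x => ((U x).norm_map ξ).trans_le (hmin w hwF)) hw
      obtain ⟨S, hS, hSε⟩ := (Metric.cauchy_iff.1 hstrong.cauchy_map).2 (ε / (‖η‖ + 1))
        (by positivity)
      obtain ⟨y, hyS, hyD⟩ := V.nonempty_of_mem (inter_mem hS (hV hD))
      refine ⟨y, mem_of_superset hS fun x hx =>
        ⟨hyD, sub_mem_stabilizer_of_norm_sub_lt hgap ?_⟩⟩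
      calc ‖η‖ * ‖U x ξ - U y ξ‖ ≤ (‖η‖ + 1) * ‖U x ξ - U y ξ‖ := by gcongr; linarith
        _ < ε := by
          rw [← dist_eq_norm, mul_comm, ← lt_div_iff₀ (by positivity)]
          exact hSε _ hx _ hyS
  exact ⟨t, ht, mem_of_superset hcov fun x hx => mem_iUnion₂.1 hx |>.elim fun y hy =>
    hy.elim fun hyt hxy => ⟨y, hyt, hxy⟩⟩

end UnitaryRepresentation

section LatticeCovers

variable {E : Type*} [NormedAddCommGroup E] [NormedSpace ℝ E]

/-- `S` is covered by finitely many cosets of lattices: each lattice in `L` contributes its cosets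
by the elements of `W`. -/
def IsCoveredByLattices (S : Set E) : Prop :=
  ∃ (W : Set E) (L : Set (AddSubgroup E)), W.Finite ∧ L.Finite ∧ (∀ P ∈ L, IsLattice P) ∧
    S ⊆ ⋃ P ∈ L, W + (P : Set E)

namespace IsCoveredByLattices

variable {S T : Set E}

theorem mono (hT : IsCoveredByLattices T) (hST : S ⊆ T) : IsCoveredByLattices S := by
  obtain ⟨W, L, hW, hL, hP, hcov⟩ := hT
  exact ⟨W, L, hW, hL, hP, hST.trans hcov⟩

theorem empty : IsCoveredByLattices (∅ : Set E) :=
  ⟨∅, ∅, finite_empty, finite_empty, fun _ hP => hP.elim, empty_subset _⟩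

theorem union (hS : IsCoveredByLattices S) (hT : IsCoveredByLattices T) :
    IsCoveredByLattices (S ∪ T) := by
  obtain ⟨W, L, hW, hL, hP, hcov⟩ := hS
  obtain ⟨W', L', hW', hL', hP', hcov'⟩ := hT
  refine ⟨W ∪ W', L ∪ L', hW.union hW', hL.union hL', fun P h => h.elim (hP P) (hP' P),
    union_subset (hcov.trans ?_) (hcov'.trans ?_)⟩
  · exact biUnion_mono subset_union_left fun P _ => add_subset_add_right subset_union_left
  · exact biUnion_mono subset_union_right fun P _ => add_subset_add_right subset_union_right

theorem vadd (hS : IsCoveredByLattices S) (c : E) : IsCoveredByLattices (c +ᵥ S) := by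
  obtain ⟨W, L, hW, hL, hP, hcov⟩ := hS
  refine ⟨c +ᵥ W, L, hW.vadd_set, hL, hP, ?_⟩
  simpa only [vadd_set_iUnion, vadd_add_assoc] using vadd_set_mono (a := c) hcov

theorem neg (hS : IsCoveredByLattices S) : IsCoveredByLattices (-S) := by
  obtain ⟨W, L, hW, hL, hP, hcov⟩ := hS
  refine ⟨-W, L, hW.neg, hL, hP, ?_⟩
  simpa only [iUnion_neg, neg_add, neg_coe_set] using neg_subset_neg.2 hcov

end IsCoveredByLattices

variable (E) in
/-- The filter whose members are the complements of the sets covered by finitely many cosets of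
lattices. -/
def coLattices : Filter E :=
  comk IsCoveredByLattices .empty (fun _ hT _ hST => hT.mono hST) fun _ hS _ hT => hS.union hT

theorem compl_mem_coLattices {S : Set E} : Sᶜ ∈ coLattices E ↔ IsCoveredByLattices S :=
  compl_mem_comk

theorem coLattices_inf_principal_neBot {S : Set E} (hS : ¬ IsCoveredByLattices S) :
    (coLattices E ⊓ 𝓟 S).NeBot :=
  ⟨fun h => hS (compl_mem_coLattices.1 (inf_principal_eq_bot.1 h))⟩

theorem tendsto_add_const_coLattices (c : E) :
    Tendsto (fun x => x + c) (coLattices E) (coLattices E) := fun S hS => by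
  have hcov : IsCoveredByLattices Sᶜ := compl_mem_coLattices.1 (by rwa [compl_compl])
  refine mem_map.2 (mem_of_superset (compl_mem_coLattices.2 (hcov.vadd (-c))) fun x hx => ?_)
  by_contra hxS
  exact hx (mem_vadd_set.2 ⟨x + c, hxS, by rw [vadd_eq_add]; abel⟩)

end LatticeCovers

section MinimalLimits

variable {E : Type*} [NormedAddCommGroup E]
variable {H : Type*} [NormedAddCommGroup H] [InnerProductSpace ℂ H]

theorem stabilizer_subset_of_zero_mem {S : Set E} (h0 : 0 ∈ S) :
    (AddAction.stabilizer E S : Set E) ⊆ S := fun x hx => by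
  simpa using (AddAction.mem_stabilizer_set.1 hx 0).2 h0

theorem discreteTopology_stabilizer {S : Set E} {ρ : ℝ} (hρ : 0 < ρ)
    (hsep : S.Pairwise fun x y => ρ ≤ dist x y) (h0 : 0 ∈ S) :
    DiscreteTopology (AddAction.stabilizer E S) :=
  discreteTopology_of_le_norm hρ fun x hx hx0 => by
    simpa using hsep (stabilizer_subset_of_zero_mem h0 hx) h0 hx0

theorem exists_mem_eventually_inner_ne_zero [CompleteSpace H] {α : Type*} {l : Filter α}
    {V : α → H →ₗᵢ[ℂ] H} {ξ ξ' : H} {S : Set H} (hS : ξ ∈ closure S) (hξ' : ξ' ≠ 0)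
    (h : Tendsto (fun x => weakEmbedding (V x ξ)) l (𝓝 (weakEmbedding ξ'))) :
    ∃ g ∈ S, ∀ᶠ x in l, inner ℂ (V x g) ξ' ≠ 0 := by
  have hpos : 0 < ‖ξ'‖ := norm_pos_iff.2 hξ'
  obtain ⟨g, hg, hξg⟩ := Metric.mem_closure_iff.1 hS ‖ξ'‖ hpos
  have hlim : Tendsto (fun x => ‖inner ℂ (V x ξ) ξ'‖) l (𝓝 (‖ξ'‖ * ‖ξ'‖)) := by
    rw [← inner_self_eq_norm_mul_norm (𝕜 := ℂ), inner_self_re_eq_norm]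
    exact (tendsto_weakEmbedding_iff_inner_right.1 h ξ').norm
  have hlt : dist ξ g * ‖ξ'‖ < ‖ξ'‖ * ‖ξ'‖ := by gcongr
  refine ⟨g, hg, (hlim.eventually_const_lt hlt).mono fun x hx h0 => hx.not_ge ?_⟩
  calc ‖inner ℂ (V x ξ) ξ'‖ = ‖inner ℂ (V x (ξ - g)) ξ'‖ := by
        rw [map_sub, inner_sub_left, h0, sub_zero]
    _ ≤ ‖V x (ξ - g)‖ * ‖ξ'‖ := norm_inner_le_norm _ _
    _ = dist ξ g * ‖ξ'‖ := by rw [(V x).norm_map, dist_eq_norm]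

variable {U : AddChar E (H →ₗᵢ[ℂ] H)} {η ξ ξ' : H} {ε ρ : ℝ}

theorem isCoveredByLattices_support_inner_of_mem_span [NormedSpace ℝ E]
    (hcov : IsCoveredByLattices (Function.support (matrixCoeff U η ξ))) {g : H}
    (hg : g ∈ Submodule.span ℂ (range fun x => U x η)) :
    IsCoveredByLattices {x | inner ℂ (U x g) ξ ≠ 0} := by
  induction hg using Submodule.span_induction with
  | mem g hg =>
    obtain ⟨z, rfl⟩ := hg
    refine (hcov.neg.vadd (-z)).mono fun x hx => mem_vadd_set.2 ⟨x + z, ?_, ?_⟩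
    · rw [Set.mem_neg, Function.mem_support, matrixCoeff, inner_addChar_apply_right, neg_neg,
        addChar_add_apply]
      exact hx
    · rw [vadd_eq_add]; abel
  | zero => simpa only [map_zero, inner_zero_left, ne_eq, not_true_eq_false] using .empty
  | add g h _ _ hg hh =>
    refine (hg.union hh).mono fun x hx => ?_
    by_contra hn
    obtain ⟨hgx, hhx⟩ := not_or.1 hn
    exact hx (by rw [map_add, inner_add_left, not_not.1 hgx, not_not.1 hhx, add_zero])
  | smul c g _ hg =>
    refine hg.mono fun x hx h0 => hx ?_
    rw [map_smul, inner_smul_left, h0, mul_zero]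

variable [CompleteSpace H]

section

variable {l : Filter E} [l.NeBot]
  (hlim : Tendsto (fun x => weakEmbedding (U x ξ)) l (𝓝 (weakEmbedding ξ')))
  (hgap : ∀ x, matrixCoeff U η ξ x ≠ 0 → ε ≤ ‖matrixCoeff U η ξ x‖)
include hlim hgap

theorem le_norm_matrixCoeff_of_tendsto (y : E) (hy : matrixCoeff U η ξ' y ≠ 0) :
    ε ≤ ‖matrixCoeff U η ξ' y‖ :=
  have hy' := tendsto_matrixCoeff_add (η := η) hlim y
  ge_of_tendsto hy'.norm ((hy'.eventually_ne hy).mono fun x => hgap (x + y))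

theorem matrixCoeff_ne_zero_iff_eventually (hε : 0 < ε) {y : E} :
    matrixCoeff U η ξ' y ≠ 0 ↔ ∀ᶠ x in l, matrixCoeff U η ξ (x + y) ≠ 0 :=
  ne_zero_iff_eventually_ne_zero hε (fun x => hgap (x + y)) (tendsto_matrixCoeff_add hlim y)

end

theorem pairwise_le_dist_support_matrixCoeff_of_tendsto {l : Filter E} [l.NeBot]
    (hlim : Tendsto (fun x => weakEmbedding (U x ξ)) l (𝓝 (weakEmbedding ξ')))
    (hsep : (Function.support (matrixCoeff U η ξ)).Pairwise fun x y => ρ ≤ dist x y) :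
    (Function.support (matrixCoeff U η ξ')).Pairwise fun x y => ρ ≤ dist x y := by
  intro x hx y hy hxy
  obtain ⟨z, hzx, hzy⟩ := (((tendsto_matrixCoeff_add hlim x).eventually_ne hx).and
    ((tendsto_matrixCoeff_add hlim y).eventually_ne hy)).exists
  simpa only [dist_add_left] using hsep hzx hzy fun h => hxy (add_left_cancel h)

theorem exists_minimal_orbit_limit (F : Filter E) [F.NeBot] (ξ : H) :
    ∃ (ξ' : H) (V : Ultrafilter E), (V : Filter E) ≤ F ∧
      Tendsto (fun x => weakEmbedding (U x ξ)) V (𝓝 (weakEmbedding ξ')) ∧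
      ∀ w ∈ weakClusterSet F fun x => U x ξ, ‖ξ'‖ ≤ ‖w‖ := by
  obtain ⟨ξ', hξ', hmin⟩ := exists_norm_le_of_mem_weakClusterSet F fun x => ((U x).norm_map ξ).le
  obtain ⟨V, hV, hlim⟩ := mapClusterPt_iff_ultrafilter.1 hξ'
  exact ⟨ξ', V, hV, hlim, hmin⟩

section Cover

variable [NormedSpace ℝ E] [FiniteDimensional ℝ E]

theorem isCoveredByLattices_support_minimal_limit (hε : 0 < ε)
    (hgap : ∀ x, matrixCoeff U η ξ x ≠ 0 → ε ≤ ‖matrixCoeff U η ξ x‖) (hρ : 0 < ρ)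
    (hsep : (Function.support (matrixCoeff U η ξ)).Pairwise fun x y => ρ ≤ dist x y)
    (h0 : matrixCoeff U η ξ' 0 ≠ 0) {V : Ultrafilter E} (hV : (V : Filter E) ≤ coLattices E)
    (hlim : Tendsto (fun x => weakEmbedding (U x ξ)) V (𝓝 (weakEmbedding ξ')))
    (hmin : ∀ w ∈ weakClusterSet (coLattices E ⊓ 𝓟 (Function.support (matrixCoeff U η ξ)))
      fun x => U x ξ, ‖ξ'‖ ≤ ‖w‖) :
    IsCoveredByLattices (Function.support (matrixCoeff U η ξ')) := by
  set A' := Function.support (matrixCoeff U η ξ')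
  have horbit : ∀ y ∈ A', U y ξ' ∈ weakClusterSet
      (coLattices E ⊓ 𝓟 (Function.support (matrixCoeff U η ξ))) fun x => U x ξ := fun y hy =>
    addChar_apply_mem_weakClusterSet hlim (tendsto_inf.2
      ⟨(tendsto_add_const_coLattices y).mono_left hV, tendsto_principal.2
        ((matrixCoeff_ne_zero_iff_eventually hlim hgap hε).1 hy)⟩)
  obtain ⟨t, ht, hcov⟩ := exists_finite_sub_mem_stabilizer hmin
    (fun w hw => by
      obtain ⟨V', hV', hw'⟩ := mapClusterPt_iff_ultrafilter.1 hw
      exact mem_weakClusterSet_of_tendsto (hV' (mem_principal.2 horbit)) hw')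
    hε (le_norm_matrixCoeff_of_tendsto hlim hgap) (mem_principal_self A')
  have := discreteTopology_stabilizer hρ
    (pairwise_le_dist_support_matrixCoeff_of_tendsto hlim hsep) h0
  obtain ⟨P, hP, hle⟩ := IsLattice.exists_ge_of_discreteTopology (AddAction.stabilizer E A')
  refine ⟨t, {P}, ht, finite_singleton P, fun Q hQ => hQ ▸ hP, fun x hx => ?_⟩
  obtain ⟨y, hyt, -, hxy⟩ := mem_principal.1 hcov hx
  exact mem_biUnion (mem_singleton P) ⟨y, hyt, x - y, hle hxy, add_sub_cancel y x⟩

/-- Otherwise take a norm-minimal limit `ξ'` of the orbit of `ξ` along the support, away from all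
finite unions of lattice cosets. Its coefficient has such a union as support, so for `g` in the
span of the orbit of `η` the inner products `⟨U_x g, ξ'⟩` vanish along the limit; for `g` close to
`ξ` they do not. -/
theorem isCoveredByLattices_support_matrixCoeff_of_mem_closure (hε : 0 < ε)
    (hgap : ∀ x, matrixCoeff U η ξ x ≠ 0 → ε ≤ ‖matrixCoeff U η ξ x‖) (hρ : 0 < ρ)
    (hsep : (Function.support (matrixCoeff U η ξ)).Pairwise fun x y => ρ ≤ dist x y)
    (hcyclic : ξ ∈ closure (Submodule.span ℂ (range fun x => U x η) : Set H)) :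
    IsCoveredByLattices (Function.support (matrixCoeff U η ξ)) := by
  by_contra hnot
  have := coLattices_inf_principal_neBot hnot
  obtain ⟨ξ', V, hV, hlim, hmin⟩ := exists_minimal_orbit_limit (U := U)
    (coLattices E ⊓ 𝓟 (Function.support (matrixCoeff U η ξ))) ξ
  have hVco : (V : Filter E) ≤ coLattices E := hV.trans inf_le_left
  have h0 : matrixCoeff U η ξ' 0 ≠ 0 :=
    (matrixCoeff_ne_zero_iff_eventually hlim hgap hε).2
      (mem_of_superset (le_principal_iff.1 (hV.trans inf_le_right)) fun x hx => by
        rwa [mem_ofPred_eq, add_zero])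
  have hξ' : ξ' ≠ 0 := by
    rintro rfl
    exact h0 (by rw [matrixCoeff, map_zero, inner_zero_right])
  have hcov := isCoveredByLattices_support_minimal_limit hε hgap hρ hsep h0 hVco hlim hmin
  obtain ⟨g, hg, hne⟩ := exists_mem_eventually_inner_ne_zero hcyclic hξ' hlim
  have hzero : {x | inner ℂ (U x g) ξ' ≠ 0}ᶜ ∈ V :=
    hVco (compl_mem_coLattices.2 (isCoveredByLattices_support_inner_of_mem_span hcov hg))
  obtain ⟨x, hx, hx0⟩ := (hne.and hzero).exists
  exact hx0 hx

theorem isCoveredByLattices_support_matrixCoeff (hε : 0 < ε)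
    (hgap : ∀ x, matrixCoeff U η ξ x ≠ 0 → ε ≤ ‖matrixCoeff U η ξ x‖) (hρ : 0 < ρ)
    (hsep : (Function.support (matrixCoeff U η ξ)).Pairwise fun x y => ρ ≤ dist x y) :
    IsCoveredByLattices (Function.support (matrixCoeff U η ξ)) := by
  obtain ⟨ξ', hξ', heq⟩ := exists_mem_closure_span_matrixCoeff_eq U η ξ
  rw [← heq] at hgap hsep ⊢
  exact isCoveredByLattices_support_matrixCoeff_of_mem_closure hε hgap hρ hsep hξ'

end Cover

section AlmostPeriodic

variable [InnerProductSpace ℝ E]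

/-- Bohr-small translations move every point of `A` close to `A`, uniformly on `A`. -/
def IsBohrAlmostPeriodic (A : Set E) : Prop :=
  ∀ δ > 0, ∀ᶠ τ in bohrNhds E, ∀ x ∈ A, ∃ y ∈ A, dist (x + τ) y < δ

theorem support_subset_of_tendsto_bohrNhds (hε : 0 < ε)
    (hgap : ∀ x, matrixCoeff U η ξ x ≠ 0 → ε ≤ ‖matrixCoeff U η ξ x‖) (hρ : 0 < ρ)
    (hsep : (Function.support (matrixCoeff U η ξ)).Pairwise fun x y => ρ ≤ dist x y)
    (hap : IsBohrAlmostPeriodic (Function.support (matrixCoeff U η ξ)))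
    {V : Ultrafilter E} (hV : (V : Filter E) ≤ bohrNhds E)
    (hlim : Tendsto (fun x => weakEmbedding (U x ξ)) V (𝓝 (weakEmbedding ξ'))) :
    Function.support (matrixCoeff U η ξ') ⊆ Function.support (matrixCoeff U η ξ) := by
  intro y hy
  have hclosed : IsClosed (Function.support (matrixCoeff U η ξ)) :=
    isClosed_of_pairwise_le_dist hρ hsep
  refine hclosed.closure_eq ▸ Metric.mem_closure_iff.2 fun δ hδ => ?_
  obtain ⟨x, hx, hxδ⟩ := (((matrixCoeff_ne_zero_iff_eventually hlim hgap hε).1 hy).and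
    (hV (tendsto_neg_bohrNhds.eventually (hap δ hδ)))).exists
  obtain ⟨z, hz, hd⟩ := hxδ _ hx
  exact ⟨z, hz, by rwa [add_neg_cancel_comm] at hd⟩

/-- The period group of the coefficient of a norm-minimal limit along Bohr-small elements of `P`
has finite index in `P`. -/
theorem exists_isLattice_le_vadd_subset_support [FiniteDimensional ℝ E] (hε : 0 < ε)
    (hgap : ∀ x, matrixCoeff U η ξ x ≠ 0 → ε ≤ ‖matrixCoeff U η ξ x‖) (hρ : 0 < ρ)
    (hsep : (Function.support (matrixCoeff U η ξ)).Pairwise fun x y => ρ ≤ dist x y)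
    (hap : IsBohrAlmostPeriodic (Function.support (matrixCoeff U η ξ)))
    {P : AddSubgroup E} (hP : IsLattice P) {x : E}
    (hx : ∀ᶠ p in bohrNhds E, p ∈ P → x + p ∈ Function.support (matrixCoeff U η ξ)) :
    ∃ R ≤ P, IsLattice R ∧ x +ᵥ (R : Set E) ⊆ Function.support (matrixCoeff U η ξ) := by
  set F := bohrNhds E ⊓ 𝓟 (P : Set E)
  have hadd : Tendsto (fun p : E × E => p.1 + p.2) (F ×ˢ F) F :=
    tendsto_inf.2 ⟨tendsto_add_bohrNhds.mono_left (prod_mono inf_le_left inf_le_left),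
      tendsto_principal.2 (mem_of_superset (prod_mem_prod (mem_inf_of_right (mem_principal_self _))
        (mem_inf_of_right (mem_principal_self _))) fun p hp => P.add_mem hp.1 hp.2)⟩
  have := bohrNhds_inf_principal_neBot P
  obtain ⟨ξ', V, hV, hlim, hmin⟩ := exists_minimal_orbit_limit (U := U) F ξ
  have hx' : matrixCoeff U η ξ' x ≠ 0 :=
    (matrixCoeff_ne_zero_iff_eventually hlim hgap hε).2
      (mem_of_superset (hV (eventually_inf_principal.2 hx)) fun p hp => by
        rwa [mem_ofPred_eq, add_comm])
  set N := AddAction.stabilizer E (Function.support (matrixCoeff U η ξ'))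
  obtain ⟨t, ht, hcov⟩ := exists_finite_sub_mem_stabilizer hmin
    (fun w => mem_weakClusterSet_trans hadd (mapClusterPt_iff_ultrafilter.2 ⟨V, hV, hlim⟩))
    hε (le_norm_matrixCoeff_of_tendsto hlim hgap)
    (mem_inf_of_right (mem_principal_self (P : Set E)))
  obtain ⟨K, hK, hPK⟩ := exists_finite_subset_add_inter_bohrNhds P (mem_inf_principal.1 hcov)
  refine ⟨P ⊓ N, inf_le_left, hP.of_subset_add inf_le_left (hK.add ht) fun p hp => ?_, ?_⟩
  · obtain ⟨k, hk, q, ⟨hqP, hq⟩, rfl⟩ := hPK hp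
    obtain ⟨y, hyt, hyP, hqy⟩ := hq hqP
    exact ⟨k + y, add_mem_add hk hyt, q - y, ⟨P.sub_mem hqP hyP, hqy⟩, by simp only; abel⟩
  · rintro _ ⟨r, hr, rfl⟩
    refine support_subset_of_tendsto_bohrNhds hε hgap hρ hsep hap (hV.trans inf_le_left) hlim ?_
    simpa only [vadd_eq_add, add_comm x r] using (AddAction.mem_stabilizer_set.1 hr.2 x).2 hx'

end AlmostPeriodic

end MinimalLimits

section Cosets

variable {E : Type*} [AddCommGroup E]

theorem add_mem_add_coe {P : AddSubgroup E} {W : Set E} {x q : E} (hx : x ∈ W + (P : Set E))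
    (hq : q ∈ P) : x + q ∈ W + (P : Set E) := by
  obtain ⟨w, hw, p, hp, rfl⟩ := hx
  exact ⟨w, hw, p + q, P.add_mem hp hq, (add_assoc w p q).symm⟩

theorem vadd_coe_eq_of_mem_vadd {P : AddSubgroup E} {x y : E} (h : y ∈ x +ᵥ (P : Set E)) :
    x +ᵥ (P : Set E) = y +ᵥ (P : Set E) :=
  leftAddCoset_eq_iff P |>.2 ((mem_leftAddCoset_iff x).1 h)

theorem finite_image_vadd_coe {P : AddSubgroup E} {A K : Set E} (hK : K.Finite)
    (hA : A ⊆ K + (P : Set E)) : ((fun x => x +ᵥ (P : Set E)) '' A).Finite := by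
  refine (hK.image fun x => x +ᵥ (P : Set E)).subset ?_
  rintro _ ⟨x, hx, rfl⟩
  obtain ⟨k, hk, p, hp, rfl⟩ := hA hx
  exact ⟨k, hk, vadd_coe_eq_of_mem_vadd ⟨p, hp, rfl⟩⟩

theorem exists_vadd_inter_vadd_subset (P Q : AddSubgroup E) (w z : E) :
    ∃ c : E, (w +ᵥ (P : Set E)) ∩ (z +ᵥ (Q : Set E)) ⊆ c +ᵥ ((P ⊓ Q : AddSubgroup E) : Set E) := by
  obtain hempty | ⟨c, hcP, hcQ⟩ := ((w +ᵥ (P : Set E)) ∩ (z +ᵥ (Q : Set E))).eq_empty_or_nonempty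
  · exact ⟨0, hempty ▸ empty_subset _⟩
  · refine ⟨c, fun x ⟨hxP, hxQ⟩ => ?_⟩
    rw [mem_vadd_set_iff_neg_vadd_mem, SetLike.mem_coe, vadd_eq_add] at *
    have hx : ∀ u : E, -c + x = (-u + x) - (-u + c) := fun u => by abel
    exact ⟨hx w ▸ P.sub_mem hxP hcP, hx z ▸ Q.sub_mem hxQ hcQ⟩

/-- The points lying in cosets, represented in `W`, of two different groups of the family `L`. -/
def overlap (W : Set E) (L : Set (AddSubgroup E)) : Set E :=
  ⋃ p ∈ L.offDiag, (W + (p.1 : Set E)) ∩ (W + (p.2 : Set E))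

end Cosets

section ReducedCovers

variable {E : Type*} [NormedAddCommGroup E]

theorem exists_norm_add_nsmul_mem_Ico [NormedSpace ℝ E] {c v : E} {a b : ℝ} (hc : ‖c‖ < a)
    (hv : v ≠ 0) (hvb : ‖v‖ ≤ b) : ∃ k : ℕ, ‖c + k • v‖ ∈ Ico a (a + b) := by
  have hex : ∃ k : ℕ, a ≤ ‖c + k • v‖ := by
    have hlim : Tendsto (fun k : ℕ => (k : ℝ) * ‖v‖ - ‖c‖) atTop atTop :=
      tendsto_atTop_add_const_right _ _
        (tendsto_natCast_atTop_atTop.atTop_mul_const (norm_pos_iff.2 hv))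
    obtain ⟨k, hk⟩ := (hlim.eventually_ge_atTop a).exists
    refine ⟨k, hk.trans ?_⟩
    rw [← Real.norm_natCast, ← norm_smul, Nat.cast_smul_eq_nsmul, add_comm]
    exact norm_sub_le_norm_add _ _
  classical
  refine ⟨Nat.find hex, Nat.find_spec hex, ?_⟩
  obtain ⟨k, hk⟩ : ∃ k, Nat.find hex = k + 1 := Nat.exists_eq_succ_of_ne_zero fun h0 => by
    have h := Nat.find_spec hex
    rw [h0, zero_smul, add_zero] at h
    exact hc.not_ge h
  have hlt : ‖c + k • v‖ < a := not_le.1 (Nat.find_min hex (hk ▸ k.lt_succ_self))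
  calc ‖c + Nat.find hex • v‖ = ‖(c + k • v) + v‖ := by rw [hk, succ_nsmul, add_assoc]
    _ ≤ ‖c + k • v‖ + ‖v‖ := norm_add_le _ _
    _ < a + b := add_lt_add_of_lt_of_le hlt hvb

theorem IsRelativelyDense.exists_forall_notMem {D B : Set E} (hD : IsRelativelyDense D)
    (hB : ¬ IsRelativelyDense B) (x : E) (δ : ℝ) :
    ∃ τ ∈ D, ∀ y ∈ B, δ ≤ dist (x + τ) y := by
  by_contra! h
  obtain ⟨R, hR⟩ := hD
  refine hB ⟨R + δ, fun z => ?_⟩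
  obtain ⟨τ, hτ, hzτ⟩ := hR (z - x)
  obtain ⟨y, hy, hτy⟩ := h τ hτ
  refine ⟨y, hy, ?_⟩
  calc ‖z - y‖ = ‖(z - x - τ) + (x + τ - y)‖ := by congr 1; abel
    _ ≤ ‖z - x - τ‖ + dist (x + τ) y := by rw [dist_eq_norm]; exact norm_add_le _ _
    _ ≤ R + δ := add_le_add hzτ hτy.le

variable [NormedSpace ℝ E]

/-- A cover of `S` by finitely many lattice cosets `w + P` with `w ∈ W` and `P ∈ L`, in which
different lattices are not commensurable. -/
structure IsReducedCover (W : Set E) (L : Set (AddSubgroup E)) (S : Set E) : Prop where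
  finite_left : W.Finite
  finite_right : L.Finite
  isLattice : ∀ P ∈ L, IsLattice P
  subset : S ⊆ ⋃ P ∈ L, W + (P : Set E)
  not_isLattice_inf : L.Pairwise fun P Q => ¬ IsLattice (P ⊓ Q)

variable {W S : Set E} {L : Set (AddSubgroup E)}

theorem IsReducedCover.eq_of_isLattice_inf (h : IsReducedCover W L S) {P Q R R' : AddSubgroup E}
    (hP : P ∈ L) (hQ : Q ∈ L) (hRP : R ≤ P) (hRQ : R' ≤ Q) (hR : IsLattice (R ⊓ R')) : P = Q := by
  by_contra hne
  have hspan := Submodule.span_mono (R := ℝ) (SetLike.coe_subset_coe.2 (inf_le_inf hRP hRQ))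
  exact h.not_isLattice_inf hP hQ hne
    ((h.isLattice P hP).of_le inf_le_left (top_le_iff.1 (hR.span_eq_top.ge.trans hspan)))

variable [FiniteDimensional ℝ E]

/-- Two commensurable lattices `P`, `Q` of the cover can be replaced by the lattice `P ⊔ Q`. -/
theorem IsCoveredByLattices.exists_isReducedCover (hS : IsCoveredByLattices S) :
    ∃ W L, IsReducedCover W L S := by
  classical
  obtain ⟨W, L, hW, hL, hP, hcov⟩ := hS
  lift L to Finset (AddSubgroup E) using hL
  refine ⟨W, ?_⟩
  induction hn : L.card using Nat.strong_induction_on generalizing L with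
  | _ n ih =>
    by_cases hred : (L : Set (AddSubgroup E)).Pairwise fun P Q => ¬ IsLattice (P ⊓ Q)
    · exact ⟨L, hW, L.finite_toSet, hP, hcov, hred⟩
    simp only [Set.Pairwise, not_forall, not_not] at hred
    obtain ⟨P, hPL, Q, hQL, hne, hPQ⟩ := hred
    refine ih _ ?_ (insert (P ⊔ Q) ((L.erase P).erase Q)) ?_ ?_ rfl
    · have hQL' : Q ∈ L.erase P := Finset.mem_erase.2 ⟨hne.symm, hQL⟩
      have := Finset.card_insert_le (P ⊔ Q) ((L.erase P).erase Q)
      have := Finset.card_erase_add_one hQL'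
      have := Finset.card_erase_add_one hPL
      omega
    · intro R hR
      obtain rfl | hR := Finset.mem_insert.1 hR
      · exact (hP P hPL).sup (hP Q hQL) hPQ
      · exact hP R (Finset.mem_of_mem_erase (Finset.mem_of_mem_erase hR))
    · refine hcov.trans (iUnion₂_subset fun R hR => ?_)
      obtain ⟨R', hR', hle⟩ : ∃ R' ∈ insert (P ⊔ Q) ((L.erase P).erase Q), R ≤ R' := by
        by_cases hRP : R = P
        · exact ⟨P ⊔ Q, Finset.mem_insert_self _ _, hRP ▸ le_sup_left⟩
        by_cases hRQ : R = Q
        · exact ⟨P ⊔ Q, Finset.mem_insert_self _ _, hRQ ▸ le_sup_right⟩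
        exact ⟨R, Finset.mem_insert_of_mem
          (Finset.mem_erase.2 ⟨hRQ, Finset.mem_erase.2 ⟨hRP, hR⟩⟩), le_rfl⟩
      exact (add_subset_add_left (SetLike.coe_subset_coe.2 hle)).trans
        (subset_biUnion_of_mem (u := fun P : AddSubgroup E => W + (P : Set E)) hR')

namespace IsReducedCover

theorem not_isRelativelyDense_overlap (h : IsReducedCover W L S) :
    ¬ IsRelativelyDense (overlap W L) := by
  choose c hc using exists_vadd_inter_vadd_subset (E := E)
  have hfin : (L.offDiag ×ˢ W ×ˢ W).Finite :=
    h.finite_right.offDiag.prod (h.finite_left.prod h.finite_left)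
  refine mt (fun hd => hd.mono ?_) (not_isRelativelyDense_biUnion_vadd hfin.toFinset
    (fun i => c i.1.1 i.1.2 i.2.1 i.2.2)
    (fun i => Submodule.span ℝ ((i.1.1 ⊓ i.1.2 : AddSubgroup E) : Set E)) fun i hi htop => ?_)
  · refine iUnion₂_subset fun p hp => ?_
    rintro x ⟨⟨w, hw, q, hq, rfl⟩, ⟨z, hz, r, hr, hx⟩⟩
    have hmem := hc p.1 p.2 w z ⟨⟨q, hq, rfl⟩, ⟨r, hr, hx⟩⟩
    exact mem_biUnion (show (p, w, z) ∈ hfin.toFinset from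
      hfin.mem_toFinset.2 ⟨hp, hw, hz⟩) (vadd_set_mono Submodule.subset_span hmem)
  · obtain ⟨⟨hP, hQ, hne⟩, -⟩ := hfin.mem_toFinset.1 hi
    exact h.not_isLattice_inf hP hQ hne ((h.isLattice _ hP).of_le inf_le_left htop)

end IsReducedCover

end ReducedCovers

section RigidSets

variable {E : Type*} [NormedAddCommGroup E] [InnerProductSpace ℝ E]

/-- A `ρ`-separated Bohr almost periodic set such that, whenever it contains all translates of a
point by Bohr-small elements of a lattice, it contains the translates by a sublattice. -/
structure IsBohrRigid (ρ : ℝ) (Λ : Set E) : Prop where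
  pos : 0 < ρ
  pairwise_le_dist : Λ.Pairwise fun x y => ρ ≤ dist x y
  isBohrAlmostPeriodic : IsBohrAlmostPeriodic Λ
  exists_isLattice_vadd_subset : ∀ P : AddSubgroup E, IsLattice P → ∀ x : E,
    (∀ᶠ p in bohrNhds E, p ∈ P → x + p ∈ Λ) → ∃ R ≤ P, IsLattice R ∧ x +ᵥ (R : Set E) ⊆ Λ

/-- The points of `W + P` through which `Λ` contains a coset of a sublattice of `P`. -/
def goodPoints (Λ W : Set E) (P : AddSubgroup E) : Set E :=
  {x | x ∈ W + (P : Set E) ∧ ∃ R ≤ P, IsLattice R ∧ x +ᵥ (R : Set E) ⊆ Λ}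

/-- The group of elements of `P` that are periods of the good points of `W + P`. -/
def goodPeriods (Λ W : Set E) (P : AddSubgroup E) : AddSubgroup E :=
  P ⊓ AddAction.stabilizer E (goodPoints Λ W P)

variable {Λ W : Set E} {L : Set (AddSubgroup E)} {P Q : AddSubgroup E} {ρ : ℝ} {x y q : E}

theorem goodPoints_subset : goodPoints Λ W P ⊆ Λ := fun x ⟨_, R, _, _, hR⟩ =>
  hR (mem_vadd_set.2 ⟨0, R.zero_mem, add_zero x⟩)

theorem exists_vadd_subset_goodPoints (hx : x ∈ goodPoints Λ W P) :
    ∃ R ≤ P, IsLattice R ∧ x +ᵥ (R : Set E) ⊆ goodPoints Λ W P := by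
  obtain ⟨hxW, R, hRP, hR, hxR⟩ := hx
  refine ⟨R, hRP, hR, ?_⟩
  rintro _ ⟨r, hr, rfl⟩
  refine ⟨add_mem_add_coe hxW (hRP hr), R, hRP, hR, ?_⟩
  rintro _ ⟨s, hs, rfl⟩
  exact hxR ⟨r + s, R.add_mem hr hs, (add_assoc x r s).symm⟩

theorem add_mem_goodPoints (hq : q ∈ P) (h : ∀ y ∈ goodPoints Λ W P, y + q ∈ Λ)
    (hx : x ∈ goodPoints Λ W P) : x + q ∈ goodPoints Λ W P := by
  obtain ⟨R, hRP, hR, hxR⟩ := exists_vadd_subset_goodPoints hx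
  refine ⟨add_mem_add_coe hx.1 hq, R, hRP, hR, ?_⟩
  rintro _ ⟨r, hr, rfl⟩
  simpa only [vadd_eq_add, add_right_comm x r q] using h _ (hxR ⟨r, hr, rfl⟩)

theorem add_mem_goodPoints_of_mem_goodPeriods (hx : x ∈ goodPoints Λ W P)
    (hq : q ∈ goodPeriods Λ W P) : x + q ∈ goodPoints Λ W P :=
  add_comm q x ▸ (AddAction.mem_stabilizer_set.1 hq.2 x).2 hx

theorem vadd_goodPeriods_subset {P : AddSubgroup E} {x : E} (hx : x ∈ goodPoints Λ W P) :
    x +ᵥ (goodPeriods Λ W P : Set E) ⊆ goodPoints Λ W P := by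
  rintro _ ⟨s, hs, rfl⟩
  exact add_mem_goodPoints_of_mem_goodPeriods hx hs

theorem IsReducedCover.exists_separating_radius [FiniteDimensional ℝ E]
    (h : IsReducedCover W L Λ) {K : Set E} (hK : K.Finite) :
    ∃ σ > 0, ∀ P ∈ L, ∀ z ∈ K + (P : Set E), ‖z‖ < σ → z = 0 := by
  have hev : ∀ᶠ z in 𝓝 (0 : E), ∀ P ∈ L, z ∈ K + (P : Set E) → z = 0 :=
    (eventually_all_finite h.finite_right).2 fun P hP =>
      have := (h.isLattice P hP).discreteTopology
      eventually_eq_zero_of_mem_add P hK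
  obtain ⟨σ, hσ, hball⟩ := Metric.eventually_nhds_iff.1 hev
  exact ⟨σ, hσ, fun P hP z hz hlt => hball (by rwa [dist_zero_right]) P hP hz⟩

namespace IsBohrRigid

theorem eq_of_dist_lt (hΛ : IsBohrRigid ρ Λ) (hx : x ∈ Λ) (hy : y ∈ Λ) (h : dist x y < ρ) :
    x = y :=
  hΛ.pairwise_le_dist.eq hx hy (not_le.2 h)

variable [FiniteDimensional ℝ E]

theorem eventually_add_mem_of_notMem_overlap (hΛ : IsBohrRigid ρ Λ) (hL : IsReducedCover W L Λ)
    (hx : x ∈ Λ) (hxo : x ∉ overlap W L) (hP : P ∈ L) (hxP : x ∈ W + (P : Set E)) :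
    ∀ᶠ p in bohrNhds E, p ∈ P → x + p ∈ Λ := by
  obtain ⟨σ, hσ, hsep⟩ := hL.exists_separating_radius (hL.finite_left.sub (finite_singleton x))
  have hzero : ∀ Q ∈ L, ∀ y ∈ W + (Q : Set E), dist y x < σ → y = x := by
    rintro Q hQ _ ⟨w, hw, u, hu, rfl⟩ hlt
    refine sub_eq_zero.1 (hsep Q hQ _ ⟨w - x, sub_mem_sub hw rfl, u, hu, ?_⟩ ?_)
    · exact sub_add_eq_add_sub w x u
    · rwa [← dist_eq_norm]
  have hnear : ∀ᶠ p in bohrNhds E, ∀ Q ∈ L, ∃ u ∈ Q, ‖p - u‖ < σ / 2 :=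
    (eventually_all_finite hL.finite_right).2 fun Q hQ =>
      (hL.isLattice Q hQ).eventually_bohrNhds_exists_norm_sub_lt (half_pos hσ)
  filter_upwards [hΛ.isBohrAlmostPeriodic _ (half_pos hσ), hnear] with p hap hnear hpP
  obtain ⟨y, hy, hd⟩ := hap x hx
  obtain ⟨Q, hQ, hyQ⟩ := mem_iUnion₂.1 (hL.subset hy)
  obtain ⟨u, hu, hpu⟩ := hnear Q hQ
  have hyu : y + -u = x := by
    refine hzero Q hQ _ (add_mem_add_coe hyQ (Q.neg_mem hu)) ?_
    calc dist (y + -u) x = dist (x + u) y := by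
          rw [dist_comm, dist_eq_norm, dist_eq_norm]; congr 1; abel
      _ ≤ dist (x + u) (x + p) + dist (x + p) y := dist_triangle _ _ _
      _ < σ / 2 + σ / 2 := by
          gcongr
          rwa [dist_add_left, dist_comm, dist_eq_norm]
      _ = σ := add_halves σ
  obtain rfl : Q = P := by
    by_contra hne
    exact hxo (mem_biUnion (x := (Q, P)) ⟨hQ, hP, hne⟩
      ⟨hyu ▸ add_mem_add_coe hyQ (Q.neg_mem hu), hxP⟩)
  have hyp : y + -p = x := by
    refine hzero Q hQ _ (add_mem_add_coe hyQ (Q.neg_mem hpP)) ?_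
    calc dist (y + -p) x = dist (x + p) y := by
          rw [dist_comm, dist_eq_norm, dist_eq_norm]; congr 1; abel
      _ < σ := hd.trans (half_lt_self hσ)
  rwa [← hyp, neg_add_cancel_right]

theorem exists_mem_goodPoints_of_notMem_overlap (hΛ : IsBohrRigid ρ Λ)
    (hL : IsReducedCover W L Λ) (hx : x ∈ Λ) (hxo : x ∉ overlap W L) :
    ∃ P ∈ L, x ∈ goodPoints Λ W P := by
  obtain ⟨P, hP, hxP⟩ := mem_iUnion₂.1 (hL.subset hx)
  exact ⟨P, hP, hxP, hΛ.exists_isLattice_vadd_subset P (hL.isLattice P hP) x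
    (hΛ.eventually_add_mem_of_notMem_overlap hL hx hxo hP hxP)⟩

/-- If `R` and `R'` were not commensurable, then moving along them in parallel would slowly change
the displacement `x + q - x'` until it cannot be matched by points of `Λ`. -/
theorem isLattice_inf_of_dist_lt (hΛ : IsBohrRigid ρ Λ) {R R' : AddSubgroup E} (hR : IsLattice R)
    (hR' : IsLattice R') {x' : E} {η : ℝ} (hηρ : 4 * η ≤ ρ) (hxR : x +ᵥ (R : Set E) ⊆ Λ)
    (hxR' : x' +ᵥ (R' : Set E) ⊆ Λ) (hq : ∀ z ∈ Λ, ∃ y ∈ Λ, dist (z + q) y < η)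
    (hd : dist (x + q) x' < η) : IsLattice (R ⊓ R') := by
  by_contra hnot
  have hη : 0 < η := dist_nonneg.trans_lt hd
  obtain ⟨r, hr, r', hr', hne, hlt⟩ := hR.exists_ne_norm_sub_lt hR' hnot hη
  have hc : ‖x + q - x'‖ < 2 * η := by rw [← dist_eq_norm]; linarith
  obtain ⟨k, hk, hk'⟩ := exists_norm_add_nsmul_mem_Ico hc (sub_ne_zero.2 hne) hlt.le
  have hck : ‖(x + q - x') + k • (r - r')‖ = dist (x + k • r + q) (x' + k • r') := by
    rw [dist_eq_norm, smul_sub]; congr 1; abel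
  rw [hck] at hk hk'
  obtain ⟨y, hy, hyd⟩ := hq _ (hxR ⟨k • r, R.nsmul_mem hr k, rfl⟩)
  simp only [vadd_eq_add] at hyd
  have hyx' : y = x' + k • r' := by
    refine hΛ.eq_of_dist_lt hy (hxR' ⟨k • r', R'.nsmul_mem hr' k, rfl⟩) ?_
    have := dist_triangle_left y (x' + k • r') (x + k • r + q)
    linarith
  rw [hyx'] at hyd
  linarith

theorem eq_add_of_notMem_overlap (hΛ : IsBohrRigid ρ Λ) (hL : IsReducedCover W L Λ) (hP : P ∈ L)
    {η : ℝ} (hηρ : 4 * η ≤ ρ) (hsep : ∀ z ∈ (W - W) + (P : Set E), ‖z‖ < η → z = 0)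
    (hqP : q ∈ P) (hq : ∀ z ∈ Λ, ∃ y ∈ Λ, dist (z + q) y < η) (hx : x ∈ goodPoints Λ W P)
    (hy : y ∈ Λ) (hyo : y ∉ overlap W L) (hd : dist (x + q) y < η) : y = x + q := by
  obtain ⟨⟨w, hw, p, hp, rfl⟩, R, hRP, hR, hxR⟩ := hx
  obtain ⟨Q, hQ, ⟨w', hw', p', hp', rfl⟩, R', hRQ, hR', hyR⟩ :=
    hΛ.exists_mem_goodPoints_of_notMem_overlap hL hy hyo
  obtain rfl : P = Q := hL.eq_of_isLattice_inf hP hQ hRP hRQ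
    (hΛ.isLattice_inf_of_dist_lt hR hR' hηρ hxR hyR hq hd)
  refine sub_eq_zero.1 (hsep _ ⟨w' - w, sub_mem_sub hw' hw, p' - p - q,
    P.sub_mem (P.sub_mem hp' hp) hqP, by simp only; abel⟩ ?_)
  rwa [← dist_eq_norm, dist_comm]

/-- The point `z ∈ Λ` near `x + q` is `x + q` itself: translate by an almost period `r ∈ R`, finer
than `dist (x + q) z`, to a place where points near `x + q + r` are good. -/
theorem add_mem_of_mem_goodPoints (hΛ : IsBohrRigid ρ Λ) (hL : IsReducedCover W L Λ) (hP : P ∈ L)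
    {η : ℝ} (hηρ : 4 * η ≤ ρ) (hsep : ∀ z ∈ (W - W) + (P : Set E), ‖z‖ < η → z = 0)
    (hqP : q ∈ P) (hq : ∀ z ∈ Λ, ∃ y ∈ Λ, dist (z + q) y < η) (hx : x ∈ goodPoints Λ W P) :
    x + q ∈ Λ := by
  obtain ⟨z, hz, hzd⟩ := hq x (goodPoints_subset hx)
  by_contra hxq
  have hpos : 0 < dist (x + q) z := dist_pos.2 fun h => hxq (h ▸ hz)
  obtain ⟨R, -, hR, hxR⟩ := exists_vadd_subset_goodPoints hx
  obtain ⟨r, ⟨hrR, hr⟩, hro⟩ := IsRelativelyDense.exists_forall_notMem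
    (hR.isRelativelyDense_inter_bohrNhds (hΛ.isBohrAlmostPeriodic _ hpos))
    hL.not_isRelativelyDense_overlap (x + q) η
  have hxr : x + r ∈ goodPoints Λ W P := hxR ⟨r, hrR, rfl⟩
  obtain ⟨y, hy, hyd⟩ := hq _ (goodPoints_subset hxr)
  obtain rfl : y = x + r + q := hΛ.eq_add_of_notMem_overlap hL hP hηρ hsep hqP hq hxr hy
    (fun hyo => (hro y hyo).not_gt (by rwa [add_right_comm])) hyd
  obtain ⟨v, hv, hvd⟩ := hr z hz
  have hshift : dist (x + r + q) (z + r) = dist (x + q) z := by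
    rw [add_right_comm, dist_add_right]
  obtain rfl : x + r + q = v := by
    refine hΛ.eq_of_dist_lt hy hv ((dist_triangle _ (z + r) _).trans_lt ?_)
    have := dist_nonneg.trans_lt hzd
    linarith
  rw [dist_comm, hshift] at hvd
  exact lt_irrefl _ hvd

theorem eventually_bohrNhds_mem_goodPeriods (hΛ : IsBohrRigid ρ Λ) (hL : IsReducedCover W L Λ)
    (hP : P ∈ L) : ∀ᶠ q in bohrNhds E, q ∈ P → q ∈ goodPeriods Λ W P := by
  obtain ⟨σ, hσ, hsep⟩ := hL.exists_separating_radius (hL.finite_left.sub hL.finite_left)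
  have hη : 0 < min (ρ / 4) σ := lt_min (div_pos hΛ.pos four_pos) hσ
  have hηρ : 4 * min (ρ / 4) σ ≤ ρ := by linarith [min_le_left (ρ / 4) σ]
  have hadd : ∀ᶠ q in bohrNhds E, q ∈ P → ∀ x ∈ goodPoints Λ W P, x + q ∈ goodPoints Λ W P := by
    filter_upwards [hΛ.isBohrAlmostPeriodic _ hη] with q hq hqP x hx
    exact add_mem_goodPoints hqP (fun y => hΛ.add_mem_of_mem_goodPoints hL hP hηρ
      (fun z hz hlt => hsep P hP z hz (hlt.trans_le (min_le_right _ _))) hqP hq) hx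
  filter_upwards [hadd, tendsto_neg_bohrNhds.eventually hadd] with q hq hq' hqP
  refine ⟨hqP, AddAction.mem_stabilizer_set.2 fun x => ⟨fun hx => ?_, fun hx => ?_⟩⟩
  · simpa [add_assoc] using hq' (P.neg_mem hqP) _ hx
  · simpa only [vadd_eq_add, add_comm] using hq hqP x hx

theorem exists_finite_subset_add_goodPeriods (hΛ : IsBohrRigid ρ Λ) (hL : IsReducedCover W L Λ)
    (hP : P ∈ L) : ∃ F : Set E, F.Finite ∧ (P : Set E) ⊆ F + (goodPeriods Λ W P : Set E) := by
  obtain ⟨F, hF, hPF⟩ :=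
    exists_finite_subset_add_inter_bohrNhds P (hΛ.eventually_bohrNhds_mem_goodPeriods hL hP)
  exact ⟨F, hF, hPF.trans (add_subset_add_left fun q hq => hq.2 hq.1)⟩

theorem isLattice_goodPeriods (hΛ : IsBohrRigid ρ Λ) (hL : IsReducedCover W L Λ) (hP : P ∈ L) :
    IsLattice (goodPeriods Λ W P) :=
  let ⟨_, hF, hPF⟩ := hΛ.exists_finite_subset_add_goodPeriods hL hP
  (hL.isLattice P hP).of_subset_add inf_le_left hF hPF

theorem subset_iUnion_goodPoints (hΛ : IsBohrRigid ρ Λ) (hL : IsReducedCover W L Λ) :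
    Λ ⊆ ⋃ P ∈ L, goodPoints Λ W P := by
  intro x hx
  have hnear : ∀ᶠ τ in bohrNhds E, ∀ P ∈ L, ∃ s ∈ goodPeriods Λ W P, ‖τ - s‖ < ρ / 2 :=
    (eventually_all_finite hL.finite_right).2 fun P hP =>
      (hΛ.isLattice_goodPeriods hL hP).eventually_bohrNhds_exists_norm_sub_lt (half_pos hΛ.pos)
  obtain ⟨τ, ⟨hτ, hτs⟩, hτo⟩ := IsRelativelyDense.exists_forall_notMem
    (isRelativelyDense_of_mem_bohrNhds
      ((hΛ.isBohrAlmostPeriodic _ (half_pos hΛ.pos)).and hnear))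
    hL.not_isRelativelyDense_overlap x (ρ / 2)
  obtain ⟨y, hy, hyd⟩ := hτ x hx
  obtain ⟨P, hP, hyP⟩ := hΛ.exists_mem_goodPoints_of_notMem_overlap hL hy
    fun hyo => (hτo y hyo).not_gt hyd
  obtain ⟨s, hs, hsd⟩ := hτs P hP
  have hys := add_mem_goodPoints_of_mem_goodPeriods hyP (neg_mem hs)
  have hxy : x = y + -s := by
    refine hΛ.eq_of_dist_lt hx (goodPoints_subset hys) ?_
    calc dist x (y + -s) = ‖(x + τ - y) - (τ - s)‖ := by rw [dist_eq_norm]; congr 1; abel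
      _ ≤ dist (x + τ) y + ‖τ - s‖ := by rw [dist_eq_norm]; exact norm_sub_le _ _
      _ < ρ := by linarith
  exact mem_biUnion hP (hxy ▸ hys)

theorem disjoint_goodPoints (hΛ : IsBohrRigid ρ Λ) (hL : IsReducedCover W L Λ) (hP : P ∈ L)
    (hQ : Q ∈ L) (hne : P ≠ Q) : Disjoint (goodPoints Λ W P) (goodPoints Λ W Q) := by
  refine disjoint_left.2 fun x hxP hxQ => ?_
  obtain ⟨r, hr, s, hs, hrs, hd⟩ := (hΛ.isLattice_goodPeriods hL hP).exists_ne_norm_sub_lt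
    (hΛ.isLattice_goodPeriods hL hQ)
    (fun h => hne (hL.eq_of_isLattice_inf hP hQ inf_le_left inf_le_left h)) hΛ.pos
  refine hrs (add_left_cancel (hΛ.eq_of_dist_lt
    (goodPoints_subset (add_mem_goodPoints_of_mem_goodPeriods hxP hr))
    (goodPoints_subset (add_mem_goodPoints_of_mem_goodPeriods hxQ hs)) ?_))
  rwa [dist_add_left, dist_eq_norm]

end IsBohrRigid

end RigidSets

section CosetPartition

variable {E : Type*} [NormedAddCommGroup E] [InnerProductSpace ℝ E] [FiniteDimensional ℝ E]
  {Λ W : Set E} {L : Set (AddSubgroup E)} {ρ : ℝ}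

theorem IsBohrRigid.finite_image_vadd_goodPeriods (hΛ : IsBohrRigid ρ Λ)
    (hL : IsReducedCover W L Λ) {P : AddSubgroup E} (hP : P ∈ L) :
    ((fun x => x +ᵥ (goodPeriods Λ W P : Set E)) '' goodPoints Λ W P).Finite := by
  obtain ⟨F, hF, hPF⟩ := hΛ.exists_finite_subset_add_goodPeriods hL hP
  refine finite_image_vadd_coe (hL.finite_left.add hF) fun x hx => ?_
  rw [add_assoc]
  exact add_subset_add_left hPF hx.1

theorem IsBohrRigid.exists_finite_partition_vadd (hΛ : IsBohrRigid ρ Λ)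
    (hcov : IsCoveredByLattices Λ) :
    ∃ C : Set (Set E), C.Finite ∧ C.PairwiseDisjoint id ∧ ⋃₀ C = Λ ∧
      ∀ c ∈ C, ∃ (v : E) (P : AddSubgroup E), IsLattice P ∧ c = v +ᵥ (P : Set E) := by
  obtain ⟨W, L, hL⟩ := hcov.exists_isReducedCover
  refine ⟨⋃ P ∈ L, (fun x => x +ᵥ (goodPeriods Λ W P : Set E)) '' goodPoints Λ W P,
    hL.finite_right.biUnion fun P => hΛ.finite_image_vadd_goodPeriods hL, ?_, ?_, ?_⟩
  · simp only [PairwiseDisjoint, Set.Pairwise, mem_iUnion₂, mem_image]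
    rintro _ ⟨P, hP, x, hx, rfl⟩ _ ⟨Q, hQ, y, hy, rfl⟩ hne
    obtain rfl | hPQ := eq_or_ne P Q
    · refine disjoint_left.2 fun z hzx hzy => hne ?_
      exact (vadd_coe_eq_of_mem_vadd hzx).trans (vadd_coe_eq_of_mem_vadd hzy).symm
    · exact (hΛ.disjoint_goodPoints hL hP hQ hPQ).mono (vadd_goodPeriods_subset hx)
        (vadd_goodPeriods_subset hy)
  · refine (sUnion_subset fun c hc => ?_).antisymm fun x hx => ?_
    · obtain ⟨P, -, x, hx, rfl⟩ := mem_iUnion₂.1 hc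
      exact (vadd_goodPeriods_subset hx).trans goodPoints_subset
    · obtain ⟨P, hP, hxP⟩ := mem_iUnion₂.1 (hΛ.subset_iUnion_goodPoints hL hx)
      exact ⟨_, mem_biUnion hP (mem_image_of_mem _ hxP),
        mem_vadd_set.2 ⟨0, zero_mem _, add_zero x⟩⟩
  · intro c hc
    obtain ⟨P, hP, x, -, rfl⟩ := mem_iUnion₂.1 hc
    exact ⟨x, _, hΛ.isLattice_goodPeriods hL hP, rfl⟩

end CosetPartition

section IsometryHoms

/-- The additive character with values in a product of monoids and components `U i`. -/
def addCharPi {ι G : Type*} [AddMonoid G] {M : ι → Type*} [∀ i, Monoid (M i)]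
    (U : ∀ i, AddChar G (M i)) : AddChar G (∀ i, M i) where
  toFun x i := U i x
  map_zero_eq_one' := funext fun i => (U i).map_zero_eq_one
  map_add_eq_mul' x y := funext fun i => (U i).map_add_eq_mul x y

/-- The unit circle acts by linear isometries. -/
def circleSMulHom (H : Type*) [SeminormedAddCommGroup H] [NormedSpace ℂ H] :
    Circle →* (H →ₗᵢ[ℂ] H) where
  toFun z :=
    { toFun h := z • h
      map_add' := smul_add z
      map_smul' c := smul_comm z c
      norm_map' := Circle.norm_smul z }
  map_one' := LinearIsometry.ext (one_smul Circle)
  map_mul' z w := LinearIsometry.ext (mul_smul z w)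

/-- `T ↦ (f ↦ (T i (f i))ᵢ)`, the action of families of linear isometries on `ℓᵖ`. -/
def lpMapHom {ι : Type*} (K : ι → Type*) [∀ i, NormedAddCommGroup (K i)]
    [∀ i, InnerProductSpace ℂ (K i)] (p : ℝ≥0∞) [hp : Fact (1 ≤ p)] :
    (∀ i, K i →ₗᵢ[ℂ] K i) →* (lp K p →ₗᵢ[ℂ] lp K p) where
  toFun T :=
    { toFun f := ⟨fun i => T i (f i), (lp.memℓp f).mono' fun i => ((T i).norm_map (f i)).le⟩
      map_add' f g := Subtype.ext (funext fun i => map_add (T i) (f i) (g i))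
      map_smul' c f := Subtype.ext (funext fun i => map_smul (T i) c (f i))
      norm_map' f := (lp.norm_mono (zero_lt_one.trans_le hp.out).ne' fun i =>
        ((T i).norm_map (f i)).le).antisymm (lp.norm_mono (zero_lt_one.trans_le hp.out).ne'
          fun i => ((T i).norm_map (f i)).ge) }
  map_one' := rfl
  map_mul' _ _ := rfl

/-- The functoriality of completions on linear isometries. -/
def completionHom (V : Type*) [SeminormedAddCommGroup V] [InnerProductSpace ℂ V] :
    (V →ₗᵢ[ℂ] V) →* (UniformSpace.Completion V →ₗᵢ[ℂ] UniformSpace.Completion V) where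
  toFun T :=
    { toLinearMap := T.toContinuousLinearMap.completion
      norm_map' h := by
        induction h using UniformSpace.Completion.induction_on with
        | hp =>
          exact isClosed_eq T.toContinuousLinearMap.completion.continuous.norm continuous_norm
        | ih v =>
          change ‖T.toContinuousLinearMap.completion v‖ = _
          rw [ContinuousLinearMap.completion_apply_coe, UniformSpace.Completion.norm_coe,
            UniformSpace.Completion.norm_coe]
          exact T.norm_map v }
  map_one' := LinearIsometry.ext fun h => congrFun UniformSpace.Completion.map_id h
  map_mul' S T := LinearIsometry.ext fun h => (congrFun (UniformSpace.Completion.map_comp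
    S.isometry.uniformContinuous T.isometry.uniformContinuous) h).symm

end IsometryHoms

section Ultraproduct

variable {ι : Type*} (K : ι → Type*) [∀ i, NormedAddCommGroup (K i)]
  [∀ i, InnerProductSpace ℂ (K i)] (𝒰 : Ultrafilter ι)

/-- The bounded families in `K`, to be equipped with the limit along `𝒰` of the inner products of
the `K i`. -/
def PreUltraproduct (_ : Ultrafilter ι) : Type _ := lp K ∞

instance : AddCommGroup (PreUltraproduct K 𝒰) := inferInstanceAs (AddCommGroup (lp K ∞))

instance : Module ℂ (PreUltraproduct K 𝒰) := inferInstanceAs (Module ℂ (lp K ∞))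

variable {K}

theorem tendsto_inner_limUnder (f g : lp K ∞) :
    Tendsto (fun i => inner ℂ (f i) (g i)) 𝒰 (𝓝 (limUnder 𝒰 fun i => inner ℂ (f i) (g i))) := by
  refine tendsto_nhds_limUnder ?_
  obtain ⟨z, -, hz⟩ := (isCompact_closedBall (0 : ℂ) (‖f‖ * ‖g‖)).ultrafilter_le_nhds
    (𝒰.map fun i => inner ℂ (f i) (g i)) <| le_principal_iff.2 <| Ultrafilter.mem_map.2 <|
      univ_mem' fun i => mem_closedBall_zero_iff.2 <| (norm_inner_le_norm _ _).trans <|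
        mul_le_mul (lp.norm_apply_le_norm ENNReal.top_ne_zero f i)
          (lp.norm_apply_le_norm ENNReal.top_ne_zero g i) (norm_nonneg _) (norm_nonneg _)
  exact ⟨z, hz⟩

/-- The limit along `𝒰` of the inner products of the `K i`. -/
abbrev preUltraproductCore : PreInnerProductSpace.Core ℂ (PreUltraproduct K 𝒰) where
  inner f g := limUnder 𝒰 fun i => inner ℂ (f.1 i) (g.1 i)
  conj_inner_symm f g := by
    refine tendsto_nhds_unique ?_ (tendsto_inner_limUnder 𝒰 f g)
    exact ((Complex.continuous_conj.tendsto _).comp (tendsto_inner_limUnder 𝒰 g f)).congr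
      fun i => inner_conj_symm _ _
  re_inner_nonneg f := ge_of_tendsto
    ((Complex.continuous_re.tendsto _).comp (tendsto_inner_limUnder 𝒰 f f))
    (Eventually.of_forall fun i => inner_self_nonneg (𝕜 := ℂ))
  add_left f g h := by
    refine tendsto_nhds_unique (tendsto_inner_limUnder 𝒰 (f + g : lp K ∞) h) ?_
    exact ((tendsto_inner_limUnder 𝒰 f h).add (tendsto_inner_limUnder 𝒰 g h)).congr
      fun i => (inner_add_left _ _ _).symm
  smul_left f g c := by
    refine tendsto_nhds_unique (tendsto_inner_limUnder 𝒰 (c • f : lp K ∞) g) ?_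
    exact ((tendsto_inner_limUnder 𝒰 f g).const_mul _).congr
      fun i => (inner_smul_left _ _ _).symm

instance : SeminormedAddCommGroup (PreUltraproduct K 𝒰) :=
  InnerProductSpace.Core.toSeminormedAddCommGroup (c := preUltraproductCore 𝒰)

instance : InnerProductSpace ℂ (PreUltraproduct K 𝒰) :=
  InnerProductSpace.ofCore (preUltraproductCore 𝒰)

theorem inner_preUltraproduct_eq_of_tendsto {f g : PreUltraproduct K 𝒰} {z : ℂ}
    (h : Tendsto (fun i => inner ℂ (f.1 i) (g.1 i)) 𝒰 (𝓝 z)) : inner ℂ f g = z :=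
  h.limUnder_eq

/-- Families of linear isometries of the `K i` act on `PreUltraproduct K 𝒰`. -/
def preUltraproductMapHom :
    (∀ i, K i →ₗᵢ[ℂ] K i) →* (PreUltraproduct K 𝒰 →ₗᵢ[ℂ] PreUltraproduct K 𝒰) where
  toFun T := LinearMap.isometryOfInner
    { toFun f := lpMapHom K ∞ T f
      map_add' := (lpMapHom K ∞ T).map_add
      map_smul' := (lpMapHom K ∞ T).map_smul } fun f g =>
        inner_preUltraproduct_eq_of_tendsto 𝒰 ((tendsto_inner_limUnder 𝒰 f g).congr fun i =>
          ((T i).inner_map_map _ _).symm)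
  map_one' := rfl
  map_mul' _ _ := rfl

/-- The ultraproduct along `𝒰` of unitary representations of `G`. -/
def ultraproductRep {G : Type*} [AddMonoid G] (U : ∀ i, AddChar G (K i →ₗᵢ[ℂ] K i)) :
    AddChar G (UniformSpace.Completion (PreUltraproduct K 𝒰) →ₗᵢ[ℂ]
      UniformSpace.Completion (PreUltraproduct K 𝒰)) :=
  ((completionHom _).comp (preUltraproductMapHom 𝒰)).compAddChar (addCharPi U)

theorem matrixCoeff_ultraproductRep_eq_of_tendsto {G : Type*} [AddCommGroup G]
    {U : ∀ i, AddChar G (K i →ₗᵢ[ℂ] K i)} {f g : PreUltraproduct K 𝒰} {x : G} {z : ℂ}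
    (h : Tendsto (fun i => matrixCoeff (U i) (f.1 i) (g.1 i) x) 𝒰 (𝓝 z)) :
    matrixCoeff (ultraproductRep 𝒰 U) (f : UniformSpace.Completion _)
        (g : UniformSpace.Completion _) x = z := by
  rw [← inner_preUltraproduct_eq_of_tendsto 𝒰 (f := f)
    (g := preUltraproductMapHom 𝒰 (fun i => U i x) g) h, ← UniformSpace.Completion.inner_coe]
  exact congrArg _ (ContinuousLinearMap.completion_apply_coe _ _)

end Ultraproduct

section AbsolutelySummable

universe u

variable {E : Type u} [NormedAddCommGroup E] [InnerProductSpace ℝ E]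

variable (E) in
/-- The representation of `E` on `ℓ²(E)` in which `x` multiplies by `γ ↦ e^{2πi⟨γ,x⟩}`. -/
def characterRep : AddChar E (lp (fun _ : E => ℂ) 2 →ₗᵢ[ℂ] lp (fun _ : E => ℂ) 2) :=
  (lpMapHom _ 2).compAddChar (addCharPi fun γ => (circleSMulHom ℂ).compAddChar (bohrChar γ))

theorem matrixCoeff_characterRep (f g : lp (fun _ : E => ℂ) 2) (x : E) :
    matrixCoeff (characterRep E) f g x = ∑' γ, inner ℂ (f γ) (g γ) * (bohrChar γ x : ℂ) := by
  rw [matrixCoeff, lp.inner_eq_tsum]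
  refine tsum_congr fun γ => ?_
  rw [mul_comm]
  exact inner_smul_right (f γ) (g γ) (bohrChar γ x : ℂ)

theorem exists_lp_inner_eq {ι : Type*} {c : ι → ℂ} (hc : Summable fun i => ‖c i‖) :
    ∃ f g : lp (fun _ : ι => ℂ) 2, (∀ i, inner ℂ (f i) (g i) = c i) ∧
      ‖f‖ ^ 2 = ∑' i, ‖c i‖ ∧ ‖g‖ ^ 2 = ∑' i, ‖c i‖ := by
  have hmem : ∀ f : ι → ℂ, (∀ i, ‖f i‖ ^ 2 = ‖c i‖) → Memℓp f 2 := fun f hf => by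
    rw [memℓp_gen_iff (by norm_num)]
    exact hc.congr fun i => by simp [← hf]
  have hnorm : ∀ f : lp (fun _ : ι => ℂ) 2, (∀ i, ‖f i‖ ^ 2 = ‖c i‖) →
      ‖f‖ ^ 2 = ∑' i, ‖c i‖ := fun f hf => by
    simpa [hf] using lp.norm_rpow_eq_tsum (p := 2) (by norm_num) f
  have hf : ∀ i, ‖((√‖c i‖ : ℝ) : ℂ)‖ ^ 2 = ‖c i‖ := fun i => by
    rw [Complex.norm_real, Real.norm_of_nonneg (Real.sqrt_nonneg _), Real.sq_sqrt (norm_nonneg _)]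
  have hg : ∀ i, ‖c i / (√‖c i‖ : ℝ)‖ ^ 2 = ‖c i‖ := fun i => by
    rw [norm_div, div_pow, hf, sq, mul_self_div_self]
  refine ⟨⟨_, hmem _ hf⟩, ⟨_, hmem _ hg⟩, fun i => ?_, hnorm _ hf, hnorm _ hg⟩
  change c i / (√‖c i‖ : ℝ) * (starRingEnd ℂ) (√‖c i‖ : ℝ) = c i
  rw [Complex.conj_ofReal]
  refine div_mul_cancel_of_imp fun h => ?_
  rwa [Complex.ofReal_eq_zero, Real.sqrt_eq_zero (norm_nonneg _), norm_eq_zero] at h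

theorem exists_matrixCoeff_eq_of_tendsto_tsum {c : ℕ → E → ℂ}
    {C : ℝ} (hc : ∀ n, Summable fun γ => ‖c n γ‖) (hC : ∀ n, ∑' γ, ‖c n γ‖ ≤ C) {a : E → ℂ}
    (ha : ∀ x, Tendsto (fun n => ∑' γ, c n γ * (bohrChar γ x : ℂ)) atTop (𝓝 (a x))) :
    ∃ (H : Type u) (_ : NormedAddCommGroup H) (_ : InnerProductSpace ℂ H) (_ : CompleteSpace H)
      (U : AddChar E (H →ₗᵢ[ℂ] H)) (η ξ : H), matrixCoeff U η ξ = a := by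
  choose f g hfg hf hg using fun n => exists_lp_inner_eq (hc n)
  have hmem : ∀ h : ℕ → lp (fun _ : E => ℂ) 2, (∀ n, ‖h n‖ ^ 2 = ∑' γ, ‖c n γ‖) → Memℓp h ∞ :=
    fun h hh => memℓp_infty ⟨√C, forall_mem_range.2 fun n =>
      Real.le_sqrt_of_sq_le ((hh n).trans_le (hC n))⟩
  let F : PreUltraproduct (fun _ : ℕ => lp (fun _ : E => ℂ) 2) (hyperfilter ℕ) := ⟨f, hmem f hf⟩
  let G : PreUltraproduct (fun _ : ℕ => lp (fun _ : E => ℂ) 2) (hyperfilter ℕ) := ⟨g, hmem g hg⟩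
  refine ⟨_, inferInstance, inferInstance, inferInstance,
    ultraproductRep (hyperfilter ℕ) fun _ => characterRep E, F, G, funext fun x =>
      matrixCoeff_ultraproductRep_eq_of_tendsto _ ?_⟩
  refine ((ha x).mono_left (Nat.hyperfilter_le_atTop)).congr fun n => ?_
  rw [matrixCoeff_characterRep]
  exact tsum_congr fun γ => by rw [← hfg]

theorem eventually_bohrNhds_norm_tsum_sub_lt {c : E → ℂ} (hc : Summable fun γ => ‖c γ‖) {ε : ℝ}
    (hε : 0 < ε) : ∀ᶠ τ in bohrNhds E, ∀ x,
      ‖(∑' γ, c γ * (bohrChar γ (x + τ) : ℂ)) - ∑' γ, c γ * (bohrChar γ x : ℂ)‖ < ε := by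
  have hle : ∀ τ γ, ‖c γ‖ * ‖(bohrChar γ τ : ℂ) - 1‖ ≤ ‖c γ‖ * 2 := fun τ γ =>
    mul_le_mul_of_nonneg_left ((norm_sub_le _ _).trans_eq <| by
      rw [Circle.norm_coe, norm_one, one_add_one_eq_two]) (norm_nonneg _)
  have hsum : ∀ τ, Summable fun γ => ‖c γ‖ * ‖(bohrChar γ τ : ℂ) - 1‖ := fun τ =>
    .of_nonneg_of_le (fun γ => by positivity) (hle τ) (hc.mul_right 2)
  have hlim : Tendsto (fun τ => ∑' γ, ‖c γ‖ * ‖(bohrChar γ τ : ℂ) - 1‖) (bohrNhds E) (𝓝 0) := by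
    rw [← tsum_zero (β := E)]
    refine tendsto_tsum_of_dominated_convergence (hc.mul_right 2) (fun γ => ?_)
      (Eventually.of_forall fun τ γ => (Real.norm_of_nonneg (by positivity)).trans_le (hle τ γ))
    have h : Tendsto (fun τ => (bohrChar γ τ : ℂ)) (bohrNhds E) (𝓝 1) :=
      (continuous_subtype_val.tendsto (1 : Circle)).comp (tendsto_bohrChar γ)
    simpa only [sub_self, norm_zero, mul_zero] using (h.sub_const 1).norm.const_mul ‖c γ‖
  have hs : ∀ x, Summable fun γ => c γ * (bohrChar γ x : ℂ) := fun x =>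
    .of_norm (by simpa only [norm_mul, Circle.norm_coe, mul_one] using hc)
  filter_upwards [hlim.eventually (gt_mem_nhds hε)] with τ hτ x
  rw [← (hs _).tsum_sub (hs _)]
  refine (tsum_of_norm_bounded (hsum τ).hasSum fun γ => le_of_eq ?_).trans_lt hτ
  calc ‖c γ * (bohrChar γ (x + τ) : ℂ) - c γ * (bohrChar γ x : ℂ)‖
      = ‖c γ * ((bohrChar γ x : ℂ) * ((bohrChar γ τ : ℂ) - 1))‖ := by
        rw [AddChar.map_add_eq_mul, Circle.coe_mul]; ring_nf
    _ = ‖c γ‖ * ‖(bohrChar γ τ : ℂ) - 1‖ := by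
        rw [norm_mul, norm_mul, Circle.norm_coe, one_mul]

end AbsolutelySummable

section Schwartz

open FourierTransform

variable {E : Type*} [NormedAddCommGroup E] [InnerProductSpace ℝ E]

theorem exists_schwartzMap_eq_comp_smul_sub (g : 𝓢(E, ℂ)) {c : ℝ} (hc : c ≠ 0) (x : E) :
    ∃ h : 𝓢(E, ℂ), ∀ y, h y = g (c • (y - x)) := by
  let scale : E ≃L[ℝ] E := ContinuousLinearEquiv.smulLeft (Units.mk0 c hc)
  exact ⟨compSubConstCLM ℂ x (compCLMOfContinuousLinearEquiv ℂ scale g), fun y => rfl⟩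

theorem exists_norm_schwartzMap_le_dyadic (u : 𝓢(E, ℂ)) (n : ℕ) :
    ∃ K : ℝ, 0 ≤ K ∧ ∀ y, ∃ k : ℕ, ‖y‖ < 2 ^ k ∧ ‖u y‖ ≤ K * (1 / 2) ^ (k * n) := by
  obtain ⟨K₀, hK₀, h₀⟩ := u.decay 0 0
  obtain ⟨K₁, hK₁, h₁⟩ := u.decay n 0
  simp only [pow_zero, one_mul, norm_iteratedFDeriv_zero] at h₀ h₁
  refine ⟨K₀ + K₁ * 2 ^ n, by positivity, fun y => ?_⟩
  rcases lt_or_ge ‖y‖ 1 with hy | hy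
  · refine ⟨0, by simpa using hy, ?_⟩
    simpa using (h₀ y).trans (le_add_of_nonneg_right (by positivity))
  obtain ⟨m, hm, hm'⟩ := exists_nat_pow_near hy one_lt_two
  refine ⟨m + 1, hm', ?_⟩
  have hscale : ((2 : ℝ) ^ m) ^ n * (2 ^ n * (1 / 2) ^ ((m + 1) * n)) = 1 := by
    rw [← mul_assoc, ← mul_pow, ← pow_succ, pow_mul, ← mul_pow, ← mul_pow]
    norm_num
  calc ‖u y‖ = ((2 : ℝ) ^ m) ^ n * ‖u y‖ * (2 ^ n * (1 / 2) ^ ((m + 1) * n)) := by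
        linear_combination (-‖u y‖) * hscale
    _ ≤ ‖y‖ ^ n * ‖u y‖ * (2 ^ n * (1 / 2) ^ ((m + 1) * n)) := by gcongr
    _ ≤ K₁ * (2 ^ n * (1 / 2) ^ ((m + 1) * n)) := by gcongr; exact h₁ y
    _ ≤ (K₀ + K₁ * 2 ^ n) * (1 / 2) ^ ((m + 1) * n) := by
        rw [← mul_assoc]
        gcongr
        exact le_add_of_nonneg_left hK₀.le

variable [FiniteDimensional ℝ E]

theorem exists_schwartzMap_eq_one_eq_zero_of_one_le_norm :
    ∃ ψ : 𝓢(E, ℂ), ψ 0 = 1 ∧ ∀ x, 1 ≤ ‖x‖ → ψ x = 0 := by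
  let β : ContDiffBump (0 : E) := ⟨1 / 2, 1, by norm_num, by norm_num⟩
  have hsupp : HasCompactSupport fun x => ((β x : ℝ) : ℂ) :=
    β.hasCompactSupport.comp_left (g := fun t : ℝ => (t : ℂ)) Complex.ofReal_zero
  refine ⟨hsupp.toSchwartzMap (Complex.ofRealCLM.contDiff.comp β.contDiff), ?_, fun x hx => ?_⟩
  · change ((β 0 : ℝ) : ℂ) = 1
    rw [β.one_of_mem_closedBall (by simp [β]), Complex.ofReal_one]
  · change ((β x : ℝ) : ℂ) = 0
    rw [β.zero_of_le_dist (by simpa [β] using hx), Complex.ofReal_zero]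

theorem fourierInv_comp_inv_smul_sub [MeasurableSpace E] [BorelSpace E] (g : E → ℂ) {ε : ℝ}
    (hε : 0 < ε) (x γ : E) :
    𝓕⁻ (fun y => g (ε⁻¹ • (y - x))) γ =
      (ε : ℂ) ^ Module.finrank ℝ E * 𝓕⁻ g (ε • γ) * bohrChar γ x := by
  let G : E → ℂ := fun w => Real.fourierChar ⟪ε • w + x, γ⟫ • g w
  have hG (w : E) : G w = bohrChar γ x * (Real.fourierChar ⟪w, ε • γ⟫ • g w) := by
    simp only [G, inner_add_left, AddChar.map_add_eq_mul, real_inner_smul_left,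
      real_inner_smul_right, bohrChar_apply, Circle.smul_def, Circle.coe_mul,
      smul_eq_mul]
    ring
  calc 𝓕⁻ (fun y => g (ε⁻¹ • (y - x))) γ = ∫ y, G (ε⁻¹ • (y - x)) := by
        simp only [Real.fourierInv_eq, G, smul_inv_smul₀ hε.ne', sub_add_cancel]
    _ = ∫ y, G (ε⁻¹ • y) := integral_sub_right_eq_self (fun y => G (ε⁻¹ • y)) x
    _ = ε ^ Module.finrank ℝ E • ∫ w, G w :=
        Measure.integral_comp_inv_smul_of_nonneg volume G hε.le
    _ = _ := by
        simp only [hG, integral_const_mul, Real.fourierInv_eq, Complex.real_smul,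
          Complex.ofReal_pow]
        ring

end Schwartz

section SummationFormula

open FourierTransform

variable {d : ℕ} {a b : Rd d → ℂ} {f : TemperedDist d} {ε : ℝ}

/-- The coefficients `b γ * ε ^ d * u (ε γ)`: the frequencies of the measure `b`, cut off at
scale `ε⁻¹`. When `b` is the Fourier transform of `a` and `u` the inverse Fourier transform of a
bump function `ψ`, they are the Fourier coefficients of the average of `a` against `ψ` rescaled to
width `ε`. -/
def dampedCoeff (b u : Rd d → ℂ) (ε : ℝ) (γ : Rd d) : ℂ :=
  b γ * ((ε : ℂ) ^ d * u (ε • γ))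

theorem norm_dampedCoeff (b u : Rd d → ℂ) (hε : 0 < ε) (γ : Rd d) :
    ‖dampedCoeff b u ε γ‖ = ε ^ d * (‖b γ‖ * ‖u (ε • γ)‖) := by
  rw [dampedCoeff, norm_mul, norm_mul, norm_pow, Complex.norm_real, Real.norm_of_nonneg hε.le]
  ring

theorem RepMeasure.summable_norm_dampedCoeff (hb : RepMeasure b f) (u : 𝓢(Rd d, ℂ))
    (hε : 0 < ε) : Summable fun γ => ‖dampedCoeff b u ε γ‖ := by
  obtain ⟨φ, hφ⟩ := exists_schwartzMap_eq_comp_smul_sub u hε.ne' 0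
  refine ((hb.2.1 φ).mul_left (ε ^ d)).congr fun γ => ?_
  rw [norm_dampedCoeff b u hε, hφ, sub_zero]

theorem RepMeasure.tsum_mul_eq_tsum_mul_fourierInv (ha : RepMeasure a f)
    (hb : RepMeasure b (fourierTD f)) (g : 𝓢(Rd d, ℂ)) :
    ∑' x, a x * g x = ∑' γ, b γ * (𝓕⁻ g) γ := by
  rw [← hb.2.2, ← ha.2.2, fourierTD, ContinuousLinearMap.comp_apply, fourierTransformCLM_apply,
    fourier_fourierInv_eq]

theorem RepMeasure.tsum_mul_comp_inv_smul_sub_eq (ha : RepMeasure a f)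
    (hb : RepMeasure b (fourierTD f)) (ψ : 𝓢(Rd d, ℂ)) (hε : 0 < ε) (x : Rd d) :
    ∑' l, a l * ψ (ε⁻¹ • (l - x)) = ∑' γ, dampedCoeff b (𝓕⁻ ψ : 𝓢(Rd d, ℂ)) ε γ * bohrChar γ x := by
  obtain ⟨g, hg⟩ := exists_schwartzMap_eq_comp_smul_sub ψ (inv_ne_zero hε.ne') x
  have hgF (γ : Rd d) : (𝓕⁻ g) γ = (ε : ℂ) ^ d * (𝓕⁻ ψ) (ε • γ) * bohrChar γ x := by
    rw [fourierInv_coe, fourierInv_coe, funext hg, fourierInv_comp_inv_smul_sub ψ hε x γ,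
      finrank_euclideanSpace_fin]
  simp only [← hg, ha.tsum_mul_eq_tsum_mul_fourierInv hb g, hgF, dampedCoeff, mul_assoc]

end SummationFormula

section DampedBound

variable {d : ℕ} {b u : Rd d → ℂ} {ε K : ℝ} {n : ℕ}

theorem tsum_enorm_dampedCoeff_le_tsum_ballVar (hε : 0 < ε)
    (hu : ∀ y, ∃ k : ℕ, ‖y‖ < 2 ^ k ∧ ‖u y‖ ≤ K * (1 / 2) ^ (k * n)) :
    ∑' γ, ‖dampedCoeff b u ε γ‖ₑ ≤
      ∑' k : ℕ, ENNReal.ofReal (ε ^ d * (K * (1 / 2) ^ (k * n))) * ballVar b (2 ^ k / ε) := by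
  simp only [ballVar, ← ENNReal.tsum_mul_left]
  rw [ENNReal.tsum_comm]
  refine ENNReal.tsum_le_tsum fun γ => ?_
  obtain ⟨k, hk, huk⟩ := hu (ε • γ)
  have hγ : ‖γ‖ < 2 ^ k / ε := by
    rwa [lt_div_iff₀ hε, mul_comm, ← Real.norm_of_nonneg hε.le, ← norm_smul]
  refine le_trans ?_ (ENNReal.le_tsum k)
  rw [if_pos hγ, ← enorm_eq_nnnorm, ← ofReal_norm, ← ofReal_norm (b γ),
    ← ENNReal.ofReal_mul' (norm_nonneg _), norm_dampedCoeff b u hε, mul_comm ‖b γ‖, ← mul_assoc]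
  gcongr

theorem tsum_enorm_dampedCoeff_le {C r₀ : ℝ} (hK : 0 ≤ K)
    (hu : ∀ y, ∃ k : ℕ, ‖y‖ < 2 ^ k ∧ ‖u y‖ ≤ K * (1 / 2) ^ (k * (d + 1)))
    (hb : ∀ r ≥ r₀, ballVar b r ≤ ENNReal.ofReal (C * r ^ d)) (hε : 0 < ε) (hr : r₀ ≤ 1 / ε) :
    ∑' γ, ‖dampedCoeff b u ε γ‖ₑ ≤ ENNReal.ofReal (2 * (K * |C|)) := by
  have hshell (k : ℕ) :
      ENNReal.ofReal (ε ^ d * (K * (1 / 2) ^ (k * (d + 1)))) * ballVar b (2 ^ k / ε) ≤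
        ENNReal.ofReal (K * |C| * (1 / 2) ^ k) := by
    have hk : r₀ ≤ 2 ^ k / ε := hr.trans (by gcongr; exact one_le_pow₀ one_le_two)
    have hcancel : ε ^ d * (1 / 2) ^ (k * (d + 1)) * (2 ^ k / ε) ^ d = (1 / 2) ^ k := by
      rw [mul_right_comm, ← mul_pow, mul_div_cancel₀ _ hε.ne', pow_mul, pow_succ, ← mul_assoc,
        ← mul_pow, ← mul_pow]
      norm_num
    calc _ ≤ ENNReal.ofReal (ε ^ d * (K * (1 / 2) ^ (k * (d + 1)))) *
          ENNReal.ofReal (|C| * (2 ^ k / ε) ^ d) := by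
            grw [hb _ hk, le_abs_self C]
      _ = ENNReal.ofReal (K * |C| * (1 / 2) ^ k) := by
            rw [← ENNReal.ofReal_mul (by positivity)]
            congr 1
            linear_combination (K * |C|) * hcancel
  calc _ ≤ ∑' k : ℕ, ENNReal.ofReal (K * |C| * (1 / 2) ^ k) :=
        (tsum_enorm_dampedCoeff_le_tsum_ballVar hε hu).trans (ENNReal.tsum_le_tsum hshell)
    _ = ENNReal.ofReal (2 * (K * |C|)) := by
        rw [← ENNReal.ofReal_tsum_of_nonneg (fun k => by positivity)
          (summable_geometric_two.mul_left _), tsum_mul_left, tsum_geometric_two, mul_comm]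

theorem RepMeasure.exists_eventually_tsum_norm_dampedCoeff_le {f : TemperedDist d}
    (hf : RepMeasure b f)
    (hb : ∃ C r₀ : ℝ, ∀ r ≥ r₀, ballVar b r ≤ ENNReal.ofReal (C * r ^ d)) (u : 𝓢(Rd d, ℂ)) :
    ∃ M, ∀ᶠ ε in 𝓝[>] (0 : ℝ), ∑' γ, ‖dampedCoeff b u ε γ‖ ≤ M := by
  obtain ⟨C, r₀, hb⟩ := hb
  obtain ⟨K, hK, hu⟩ := exists_norm_schwartzMap_le_dyadic u (d + 1)
  refine ⟨2 * (K * |C|), ?_⟩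
  filter_upwards [self_mem_nhdsWithin, tendsto_inv_nhdsGT_zero.eventually_ge_atTop r₀] with ε hε hr
  rw [← ENNReal.ofReal_le_ofReal_iff (by positivity),
    ENNReal.ofReal_tsum_of_nonneg (fun _ => norm_nonneg _) (hf.summable_norm_dampedCoeff u hε)]
  simpa only [ofReal_norm] using
    tsum_enorm_dampedCoeff_le hK hu hb hε (hr.trans_eq (one_div ε).symm)

end DampedBound

section Sampling

theorem exists_pos_forall_le_dist_of_pairwise {X : Type*} [MetricSpace X] {s : Set X}
    {ρ : ℝ} (hρ : 0 < ρ) (hs : s.Pairwise fun y z => ρ ≤ dist y z) (x : X) :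
    ∃ δ > 0, ∀ y ∈ s, y ≠ x → δ ≤ dist y x := by
  have hclosed : IsClosed (s \ {x}) := isClosed_of_pairwise_le_dist hρ (hs.mono sdiff_subset)
  obtain ⟨δ, hδ, hball⟩ := Metric.isOpen_iff.1 hclosed.isOpen_compl x fun hx => hx.2 rfl
  exact ⟨δ, hδ, fun y hy hyx => not_lt.1 fun hlt => hball (mem_ball.2 hlt) ⟨hy, hyx⟩⟩

variable {E : Type*} [NormedAddCommGroup E] [NormedSpace ℝ E] {a : E → ℂ} {x : E}

theorem tsum_mul_comp_inv_smul_sub_eq_self {ψ : E → ℂ} (hψ₀ : ψ 0 = 1)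
    (hψ₁ : ∀ y, 1 ≤ ‖y‖ → ψ y = 0) {ε : ℝ} (hε : 0 < ε)
    (hx : ∀ l, a l ≠ 0 → l ≠ x → ε ≤ dist l x) : ∑' l, a l * ψ (ε⁻¹ • (l - x)) = a x := by
  rw [tsum_eq_single x, sub_self, smul_zero, hψ₀, mul_one]
  intro l hl
  by_cases hal : a l = 0
  · rw [hal, zero_mul]
  rw [hψ₁, mul_zero]
  rw [norm_smul, norm_inv, Real.norm_of_nonneg hε.le, inv_mul_eq_div, one_le_div hε,
    ← dist_eq_norm]
  exact hx l hal hl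

end Sampling

namespace RepMeasure

open FourierTransform

variable {d : ℕ} {a b : Rd d → ℂ} {f : TemperedDist d} {ρ : ℝ}

theorem isBohrAlmostPeriodic_support (ha : RepMeasure a f) (hb : RepMeasure b (fourierTD f))
    {κ : ℝ} (hκ : 0 < κ) (hgap : ∀ x, a x ≠ 0 → κ ≤ ‖a x‖) (hρ : 0 < ρ)
    (hsep : (Function.support a).Pairwise fun x y => ρ ≤ dist x y) :
    IsBohrAlmostPeriodic (Function.support a) := by
  intro δ hδ
  obtain ⟨ψ, hψ₀, hψ₁⟩ := exists_schwartzMap_eq_one_eq_zero_of_one_le_norm (E := Rd d)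
  have hε : 0 < min δ ρ := lt_min hδ hρ
  filter_upwards [eventually_bohrNhds_norm_tsum_sub_lt
    (hb.summable_norm_dampedCoeff (𝓕⁻ ψ : 𝓢(Rd d, ℂ)) hε) hκ] with τ hτ x hx
  by_contra! hfar
  have hfar' : ∀ l, a l ≠ 0 → min δ ρ ≤ dist l (x + τ) := fun l hl =>
    (min_le_left _ _).trans ((hfar l hl).trans_eq (dist_comm _ _))
  have hzero : a (x + τ) = 0 := by
    by_contra hne
    exact (hfar' _ hne).not_gt (by rwa [dist_self])
  have hlt := hτ x
  rw [← ha.tsum_mul_comp_inv_smul_sub_eq hb ψ hε, ← ha.tsum_mul_comp_inv_smul_sub_eq hb ψ hε,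
    tsum_mul_comp_inv_smul_sub_eq_self hψ₀ hψ₁ hε fun l hl _ => hfar' l hl, hzero,
    tsum_mul_comp_inv_smul_sub_eq_self hψ₀ hψ₁ hε fun l hl hlx =>
      (min_le_right _ _).trans (hsep hl hx hlx), zero_sub, norm_neg] at hlt
  exact (hgap x hx).not_gt hlt

theorem exists_matrixCoeff_eq (ha : RepMeasure a f) (hb : RepMeasure b (fourierTD f))
    (hvar : ∃ C r₀ : ℝ, ∀ r ≥ r₀, ballVar b r ≤ ENNReal.ofReal (C * r ^ d)) (hρ : 0 < ρ)
    (hsep : (Function.support a).Pairwise fun x y => ρ ≤ dist x y) :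
    ∃ (H : Type) (_ : NormedAddCommGroup H) (_ : InnerProductSpace ℂ H) (_ : CompleteSpace H)
      (U : AddChar (Rd d) (H →ₗᵢ[ℂ] H)) (η ξ : H), matrixCoeff U η ξ = a := by
  obtain ⟨ψ, hψ₀, hψ₁⟩ := exists_schwartzMap_eq_one_eq_zero_of_one_le_norm (E := Rd d)
  obtain ⟨M, hM⟩ :=
    hb.exists_eventually_tsum_norm_dampedCoeff_le hvar (𝓕⁻ ψ : 𝓢(Rd d, ℂ))
  obtain ⟨ε, hε_lim, hε⟩ := exists_seq_forall_of_frequently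
    (eventually_mem_nhdsWithin.and hM : ∀ᶠ ε in 𝓝[>] (0 : ℝ), _).frequently
  refine exists_matrixCoeff_eq_of_tendsto_tsum
    (fun n => hb.summable_norm_dampedCoeff (𝓕⁻ ψ : 𝓢(Rd d, ℂ)) (hε n).1) (fun n => (hε n).2)
    fun x => tendsto_const_nhds.congr' ?_
  obtain ⟨δ, hδ, hx⟩ := exists_pos_forall_le_dist_of_pairwise hρ hsep x
  filter_upwards [(tendsto_nhds_of_tendsto_nhdsWithin hε_lim).eventually_le_const hδ] with n hn
  rw [← ha.tsum_mul_comp_inv_smul_sub_eq hb ψ (hε n).1,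
    tsum_mul_comp_inv_smul_sub_eq_self hψ₀ hψ₁ (hε n).1 fun l hl hlx => hn.trans (hx l hl hlx)]

end RepMeasure

theorem isBohrRigid_support_matrixCoeff {E : Type*} [NormedAddCommGroup E]
    [InnerProductSpace ℝ E] [FiniteDimensional ℝ E] {H : Type*} [NormedAddCommGroup H]
    [InnerProductSpace ℂ H] [CompleteSpace H] {U : AddChar E (H →ₗᵢ[ℂ] H)} {η ξ : H} {ε ρ : ℝ}
    (hε : 0 < ε) (hgap : ∀ x, matrixCoeff U η ξ x ≠ 0 → ε ≤ ‖matrixCoeff U η ξ x‖) (hρ : 0 < ρ)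
    (hsep : (Function.support (matrixCoeff U η ξ)).Pairwise fun x y => ρ ≤ dist x y)
    (hap : IsBohrAlmostPeriodic (Function.support (matrixCoeff U η ξ))) :
    IsBohrRigid ρ (Function.support (matrixCoeff U η ξ)) where
  pos := hρ
  pairwise_le_dist := hsep
  isBohrAlmostPeriodic := hap
  exists_isLattice_vadd_subset _ hP _ hx :=
    exists_isLattice_le_vadd_subset_support hε hgap hρ hsep hap hP hx

theorem IsLattice.isFullRankLattice {d : ℕ} {P : AddSubgroup (Rd d)} (hP : IsLattice P) :
    IsFullRankLattice (P : Set (Rd d)) := by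
  obtain ⟨b₀, hb₀⟩ := hP.exists_basis
  let b : Module.Basis (Fin d) ℝ (Rd d) := b₀.reindex (finCongr finrank_euclideanSpace_fin)
  have hb (x : Rd d) : x ∈ P ↔ ∀ i, b.repr x i ∈ range (algebraMap ℤ ℝ) := by
    rw [← b.mem_span_iff_repr_mem ℤ, Module.Basis.range_reindex, hb₀]
    rfl
  let T : Rd d ≃ₗ[ℝ] Rd d := WithLp.linearEquiv 2 ℝ (Fin d → ℝ) ≪≫ₗ b.equivFun.symm
  refine ⟨T, T.bijective, ext fun x => ?_⟩
  rw [LinearEquiv.coe_coe, T.image_eq_preimage_symm, SetLike.mem_coe, hb]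
  exact forall_congr' fun i => exists_congr fun n => eq_comm

/-- (Theorem 5.) Let `μ` be a pure point measure in
`S*(ℝ^d)` with uniformly discrete support `Λ` and `inf_{λ∈Λ} |μ(λ)| > 0`,
whose Fourier transform is a pure point measure with `|μ̂|(B(0,r)) = O(r^d)`.
Then `Λ` is a finite union of translates of several pairwise disjoint
full-rank lattices. -/
theorem statement17 {d : ℕ} (a : Rd d → ℂ) (f : TemperedDist d) (b : Rd d → ℂ)
    (hrep : RepMeasure a f)
    (hud : UniformlyDiscrete {x | a x ≠ 0})
    (hinf : ∃ ε > (0:ℝ), ∀ x : Rd d, a x ≠ 0 → ε ≤ ‖a x‖)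
    (hrepF : RepMeasure b (fourierTD f))
    (hvar : ∃ C r₀ : ℝ, ∀ r ≥ r₀, ballVar b r ≤ ENNReal.ofReal (C * r ^ d)) :
    ∃ (J : ℕ) (L : Fin J → Set (Rd d)) (v : Fin J → Rd d),
      (∀ j, IsFullRankLattice (L j)) ∧
      {x | a x ≠ 0} = (⋃ j, (fun y => v j + y) '' (L j)) ∧
      ∀ i j, i ≠ j →
        Disjoint ((fun y => v i + y) '' (L i)) ((fun y => v j + y) '' (L j)) := by
  obtain ⟨ρ, hρ, hsep⟩ := hud
  obtain ⟨κ, hκ, hgap⟩ := hinf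
  have hap := hrep.isBohrAlmostPeriodic_support hrepF hκ hgap hρ hsep
  obtain ⟨H, _, _, _, U, η, ξ, rfl⟩ := hrep.exists_matrixCoeff_eq hrepF hvar hρ hsep
  have hrigid := isBohrRigid_support_matrixCoeff hκ hgap hρ hsep hap
  obtain ⟨C, hfin, hdisj, hC, hcoset⟩ :=
    hrigid.exists_finite_partition_vadd (isCoveredByLattices_support_matrixCoeff hκ hgap hρ hsep)
  have := hfin.to_subtype
  obtain ⟨J, ⟨e⟩⟩ := Finite.exists_equiv_fin C
  choose v P hP hcP using fun c : C => hcoset c c.2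
  have hvP (j : Fin J) :
      (fun y => v (e.symm j) + y) '' (P (e.symm j) : Set (Rd d)) = e.symm j := (hcP _).symm
  refine ⟨J, fun j => P (e.symm j), fun j => v (e.symm j), fun j => (hP _).isFullRankLattice, ?_,
    fun i j hij => ?_⟩
  · simp only [hvP]
    rw [e.symm.surjective.iUnion_comp fun c : C => (c : Set (Rd d)), ← sUnion_eq_iUnion, hC]
    rfl
  · simp only [hvP]
    exact hdisj (e.symm i).2 (e.symm j).2 (Subtype.coe_injective.ne (e.symm.injective.ne hij))
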